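/- arXiv:2207.02034 — 2 statements merged into one kernel-verified Lean document; each statement's English description precedes it below -/
import Mathlib

section
/- (Quantum Capelli identity.) Let R be a skew-invertible Hecke symmetry with parameter q of rank m, with j_q ≠ 0 for 2 ≤ j ≤ m, let M and D be N×N matrices with entries in a unital associative ℂ-algebra 𝒜 satisfying the Reflection Equation R M₁ R M₁ = M₁ R M₁ R, the relation R⁻¹ D₁ R⁻¹ D₁ = D₁ R⁻¹ D₁ R⁻¹, and the permutation relations D₁ R M₁ = R M₁ R⁻¹ D₁ R⁻¹ + I, and set L := M D. Then, as an identity in 𝒜: ⟨A^(m) L_{1̄} (L_{2̄} + q·I) ⋯ (L_{m̄} + q^{m−1}·(m−1)_q·I)⟩_{1…m} = q^{−m} · det_R M · det_{R⁻¹} D, where det_R M := q^{m²} ⟨A^(m) M_{1̄} ⋯ M_{m̄}⟩_{1…m} and det_{R⁻¹} D := q^{m²} ⟨A^(m) D_{m̄} ⋯ D_{1̄}⟩_{1…m}. -/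
open Matrix BigOperators

noncomputable section

/-- An `N² × N²` complex matrix, viewed as an operator on `ℂ^N ⊗ ℂ^N`. -/
abbrev RMat (N : ℕ) := Matrix (Fin N × Fin N) (Fin N × Fin N) ℂ

/-- A matrix on the `k`-th tensor power of `ℂ^N`, with entries in `A`. -/
abbrev TMat (N k : ℕ) (A : Type _) := Matrix (Fin k → Fin N) (Fin k → Fin N) A

/-- The `q`-number `j_q = (q^j - q^{-j})/(q - q^{-1})`. -/
def qNum (q : ℂ) (j : ℕ) : ℂ := (q ^ j - q⁻¹ ^ j) / (q - q⁻¹)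

/-- Embedding of an `N²×N²` matrix `R` into the `k`-th tensor power,
acting in the (0-based) tensor factors `i` and `i+1`.  The paper's `R_i`
(1-based) is `embR k R (i-1)`. -/
def embR {N : ℕ} (k : ℕ) (R : RMat N) (i : ℕ) : TMat N k ℂ := fun f g =>
  if h : i + 1 < k then
    if ∀ j : Fin k, j.val ≠ i → j.val ≠ i + 1 → f j = g j then
      R (f ⟨i, Nat.lt_of_succ_lt h⟩, f ⟨i + 1, h⟩) (g ⟨i, Nat.lt_of_succ_lt h⟩, g ⟨i + 1, h⟩)
    else 0
  else (1 : TMat N k ℂ) f g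

/-- `X ⊗ I^{⊗(k-1)}` : the first copy `X_{1̄}` of an `N×N` matrix over `A`. -/
def emb1 {N : ℕ} (k : ℕ) {A : Type _} [Ring A] (X : Matrix (Fin N) (Fin N) A) :
    TMat N k A := fun f g =>
  if h : 0 < k then
    if ∀ j : Fin k, j.val ≠ 0 → f j = g j then X (f ⟨0, h⟩) (g ⟨0, h⟩) else 0
  else (1 : TMat N k A) f g

/-- Lift a complex matrix to a matrix over the `ℂ`-algebra `A`. -/
def liftC {N k : ℕ} (A : Type _) [Ring A] [Algebra ℂ A] (X : TMat N k ℂ) : TMat N k A :=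
  X.map (algebraMap ℂ A)

/-- The copies `X_{1̄}, X_{2̄}, …` of `X` in the `k`-th tensor power:
`copyX k R Rinv X i` is the paper's `X_{\overline{i+1}}`, i.e.
`X_{1̄} = X ⊗ I^{⊗(k-1)}` and `X_{\overline{i+1}} = R_i X_{ī} R_i⁻¹`. -/
def copyX {N : ℕ} (k : ℕ) (R Rinv : RMat N) {A : Type _} [Ring A] [Algebra ℂ A]
    (X : Matrix (Fin N) (Fin N) A) : ℕ → TMat N k A
  | 0 => emb1 k X
  | i + 1 => liftC A (embR k R i) * copyX k R Rinv X i * liftC A (embR k Rinv i)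

/-- The `R`-skew-symmetrizers, on the ambient `k`-th tensor power:
`Asym k R q j` is `A^{(j)}` (acting in the first `j` factors). -/
def Asym {N : ℕ} (k : ℕ) (R : RMat N) (q : ℂ) : ℕ → TMat N k ℂ
  | 0 => 1
  | 1 => 1
  | j + 2 =>
      (qNum q (j + 2))⁻¹ •
        (Asym k R q (j + 1) *
          ((q ^ (j + 1)) • (1 : TMat N k ℂ) - (qNum q (j + 1)) • embR k R j) *
          Asym k R q (j + 1))

/-- The `R`-symmetrizers, on the ambient `k`-th tensor power:
`Ssym k R q j` is `S^{(j)}` (acting in the first `j` factors). -/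
def Ssym {N : ℕ} (k : ℕ) (R : RMat N) (q : ℂ) : ℕ → TMat N k ℂ
  | 0 => 1
  | 1 => 1
  | j + 2 =>
      (qNum q (j + 2))⁻¹ •
        (Ssym k R q (j + 1) *
          ((q⁻¹ ^ (j + 1)) • (1 : TMat N k ℂ) + (qNum q (j + 1)) • embR k R j) *
          Ssym k R q (j + 1))

/-- The braid relation `R₁₂ R₂₃ R₁₂ = R₂₃ R₁₂ R₂₃` on `(ℂ^N)^{⊗3}`. -/
def IsBraiding {N : ℕ} (R : RMat N) : Prop :=
  embR 3 R 0 * embR 3 R 1 * embR 3 R 0 = embR 3 R 1 * embR 3 R 0 * embR 3 R 1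

/-- The Hecke condition `(q·I − R)(q⁻¹·I + R) = 0`. -/
def HeckeCond {N : ℕ} (R : RMat N) (q : ℂ) : Prop :=
  (q • (1 : RMat N) - R) * (q⁻¹ • (1 : RMat N) + R) = 0

/-- The Reflection Equation `R M₁ R M₁ = M₁ R M₁ R` (on `(ℂ^N)^{⊗2}`,
with entries in `A`). -/
def RERel {N : ℕ} (R : RMat N) {A : Type _} [Ring A] [Algebra ℂ A]
    (M : Matrix (Fin N) (Fin N) A) : Prop :=
  liftC A (embR 2 R 0) * emb1 2 M * liftC A (embR 2 R 0) * emb1 2 M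
    = emb1 2 M * liftC A (embR 2 R 0) * emb1 2 M * liftC A (embR 2 R 0)

/-- The relation `R⁻¹ D₁ R⁻¹ D₁ = D₁ R⁻¹ D₁ R⁻¹` on the matrix `D`,
where `Rinv = R⁻¹`. -/
def DDRel {N : ℕ} (Rinv : RMat N) {A : Type _} [Ring A] [Algebra ℂ A]
    (D : Matrix (Fin N) (Fin N) A) : Prop :=
  liftC A (embR 2 Rinv 0) * emb1 2 D * liftC A (embR 2 Rinv 0) * emb1 2 D
    = emb1 2 D * liftC A (embR 2 Rinv 0) * emb1 2 D * liftC A (embR 2 Rinv 0)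

/-- The permutation relations `D₁ R M₁ = R M₁ R⁻¹ D₁ R⁻¹ + I`, where `Rinv = R⁻¹`. -/
def PermRel {N : ℕ} (R Rinv : RMat N) {A : Type _} [Ring A] [Algebra ℂ A]
    (M D : Matrix (Fin N) (Fin N) A) : Prop :=
  emb1 2 D * liftC A (embR 2 R 0) * emb1 2 M
    = liftC A (embR 2 R 0) * emb1 2 M * liftC A (embR 2 Rinv 0) * emb1 2 D *
        liftC A (embR 2 Rinv 0) + 1

/-- `Ψ` is the skew-inverse of `R`:  `Σ_{j,b} R^{ij}_{ab} Ψ^{bc}_{jd} = δ^i_d δ^c_a`. -/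
def SkewInv {N : ℕ} (R Ψ : RMat N) : Prop :=
  ∀ i a c d : Fin N,
    (∑ j : Fin N, ∑ b : Fin N, R (i, j) (a, b) * Ψ (b, c) (j, d))
      = if i = d ∧ c = a then 1 else 0

/-- The matrix `C`, `C^c_d = Σ_i Ψ^{ic}_{id}`. -/
def Cmat {N : ℕ} (Ψ : RMat N) : Matrix (Fin N) (Fin N) ℂ :=
  fun c d => ∑ i : Fin N, Ψ (i, c) (i, d)

/-- The `R`-trace over all `k` tensor factors: `⟨X⟩_{1…k} = Tr(C^{⊗k} X)`. -/
def rTr {N k : ℕ} {A : Type _} [Ring A] [Algebra ℂ A] (C : Matrix (Fin N) (Fin N) ℂ)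
    (X : TMat N k A) : A :=
  ∑ f : Fin k → Fin N, ∑ g : Fin k → Fin N, (∏ j : Fin k, C (f j) (g j)) • X g f

/-- The chain `X_{1̄} X_{2̄} ⋯ X_{n̄}`. -/
def upChain {N : ℕ} (k : ℕ) (R Rinv : RMat N) {A : Type _} [Ring A] [Algebra ℂ A]
    (X : Matrix (Fin N) (Fin N) A) (n : ℕ) : TMat N k A :=
  ((List.range n).map (copyX k R Rinv X)).prod

/-- The reversed chain `X_{n̄} X_{\overline{n-1}} ⋯ X_{1̄}`. -/
def downChain {N : ℕ} (k : ℕ) (R Rinv : RMat N) {A : Type _} [Ring A] [Algebra ℂ A]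
    (X : Matrix (Fin N) (Fin N) A) (n : ℕ) : TMat N k A :=
  ((List.range n).reverse.map (copyX k R Rinv X)).prod

/-- The Capelli chain `L_{1̄}(L_{2̄} + q·1_q I)(L_{3̄} + q²·2_q I) ⋯ (L_{n̄} + q^{n-1}·(n-1)_q I)`
(note `0_q = 0`). -/
def capChainA {N : ℕ} (k : ℕ) (R Rinv : RMat N) (q : ℂ) {A : Type _} [Ring A] [Algebra ℂ A]
    (L : Matrix (Fin N) (Fin N) A) (n : ℕ) : TMat N k A :=
  ((List.range n).map
    (fun i => copyX k R Rinv L i + ((q ^ i) * qNum q i) • (1 : TMat N k A))).prod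

/-- The symmetric Capelli chain
`L_{1̄}(L_{2̄} - q⁻¹·1_q I) ⋯ (L_{n̄} - q^{-(n-1)}·(n-1)_q I)`. -/
def capChainS {N : ℕ} (k : ℕ) (R Rinv : RMat N) (q : ℂ) {A : Type _} [Ring A] [Algebra ℂ A]
    (L : Matrix (Fin N) (Fin N) A) (n : ℕ) : TMat N k A :=
  ((List.range n).map
    (fun i => copyX k R Rinv L i - ((q⁻¹ ^ i) * qNum q i) • (1 : TMat N k A))).prod

/-- The descending chain `R_{a→b} = R_a R_{a-1} ⋯ R_b` (1-based indices;
identity when `b > a`). -/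
def rChainDesc {N : ℕ} (k : ℕ) (R : RMat N) (a b : ℕ) : TMat N k ℂ :=
  ((List.range' b (a + 1 - b)).reverse.map (fun j => embR k R (j - 1))).prod

/-- The ascending chain `R_{b→a} = R_b R_{b+1} ⋯ R_a` (1-based indices;
identity when `b > a`). -/
def rChainAsc {N : ℕ} (k : ℕ) (R : RMat N) (b a : ℕ) : TMat N k ℂ :=
  ((List.range' b (a + 1 - b)).map (fun j => embR k R (j - 1))).prod

namespace Cap6

/-- abstract copies -/
def cp {E : Type*} [Ring E] (r r' : ℕ → E) (X : E) : ℕ → E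
  | 0 => X
  | i + 1 => r i * cp r r' X i * r' i

/-- abstract down chain -/
def dn {E : Type*} [Ring E] (r r' : ℕ → E) (X : E) : ℕ → E
  | 0 => 1
  | i + 1 => cp r r' X i * dn r r' X i

/-- abstract up chain -/
def up {E : Type*} [Ring E] (r r' : ℕ → E) (X : E) : ℕ → E
  | 0 => 1
  | i + 1 => up r r' X i * cp r r' X i

/-- `r (j+n-1) ⋯ r j` -/
def rch {E : Type*} [Ring E] (r : ℕ → E) : ℕ → ℕ → E
  | _, 0 => 1
  | j, n + 1 => rch r (j + 1) n * r j

/-- The relations of the braid generators on `m` strands. -/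
structure BD {E : Type*} [Ring E] (m : ℕ) (r r' : ℕ → E) : Prop where
  inv : ∀ i, i + 1 < m → r i * r' i = 1
  inv' : ∀ i, i + 1 < m → r' i * r i = 1
  br : ∀ i, i + 2 < m → r i * r (i + 1) * r i = r (i + 1) * r i * r (i + 1)
  far : ∀ i j, i + 1 < j → j + 1 < m → Commute (r i) (r j)

variable {E : Type*} [Ring E] {m : ℕ} {r r' : ℕ → E}

theorem comm_inv {a b b' : E} (h : Commute a b) (h1 : b * b' = 1) (h2 : b' * b = 1) :
    Commute a b' := by
  let u : Eˣ := ⟨b, b', h1, h2⟩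
  have : Commute a (u : E) := h
  exact this.units_inv_right

theorem semi_inv {w a b a' b' : E} (h : SemiconjBy w a b) (h1 : a * a' = 1) (h2 : a' * a = 1)
    (h3 : b * b' = 1) (h4 : b' * b = 1) :
    SemiconjBy w a' b' := by
  let u : Eˣ := ⟨a, a', h1, h2⟩
  let v : Eˣ := ⟨b, b', h3, h4⟩
  have : SemiconjBy w (u : E) (v : E) := h
  exact this.units_inv_right

theorem comm_lo (h : BD m r r') {X : E} (hX : ∀ i, 0 < i → i + 1 < m → Commute (r i) X)
    (i j : ℕ) (hji : j < i) (hi : i + 1 < m) : Commute (r i) (cp r r' X j) := by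
  induction j with
  | zero => exact hX i hji hi
  | succ j ih =>
    have h1 : Commute (r i) (r j) := (h.far j i hji hi).symm
    have h2 : Commute (r i) (r' j) := comm_inv h1 (h.inv j (by omega)) (h.inv' j (by omega))
    exact (h1.mul_right (ih (by omega))).mul_right h2

theorem comm_hi (h : BD m r r') {X : E} (hX : ∀ i, 0 < i → i + 1 < m → Commute (r i) X)
    (i n : ℕ) (hi : i + 2 + n < m) : Commute (r i) (cp r r' X (i + 2 + n)) := by
  induction n with
  | zero =>
    have hc : Commute (r (i + 1)) (cp r r' X i) := comm_lo h hX _ _ (by omega) (by omega)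
    have hs : SemiconjBy (r (i + 1) * r i) (r (i + 1)) (r i) := by
      have := h.br i (by omega)
      unfold SemiconjBy
      rw [← this]; simp only [mul_assoc]
    have e : cp r r' X (i + 2 + 0) = (r (i + 1) * r i) * cp r r' X i * (r' i * r' (i + 1)) := by
      simp only [Nat.add_zero, cp, mul_assoc]
    have hi1 : (r (i + 1) * r i) * (r' i * r' (i + 1)) = 1 := by
      rw [mul_assoc, ← mul_assoc (r i), h.inv i (by omega), one_mul, h.inv _ (by omega)]
    have hi2 : (r' i * r' (i + 1)) * (r (i + 1) * r i) = 1 := by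
      rw [mul_assoc, ← mul_assoc (r' (i + 1)), h.inv' (i+1) (by omega), one_mul,
        h.inv' _ (by omega)]
    let u : Eˣ := ⟨_, _, hi1, hi2⟩
    have hs2 : SemiconjBy (r' i * r' (i + 1)) (r i) (r (i + 1)) := by
      have : SemiconjBy (u : E) (r (i + 1)) (r i) := hs
      exact this.units_inv_symm_left
    rw [e]
    have : SemiconjBy ((r (i + 1) * r i) * cp r r' X i * (r' i * r' (i + 1))) (r i) (r i) :=
      (hs.mul_left hc.symm).mul_left hs2
    exact Commute.symm this
  | succ n ih =>
    have h1 : Commute (r i) (r (i + 2 + n)) := h.far _ _ (by omega) (by omega)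
    have h2 := comm_inv h1 (h.inv _ (by omega)) (h.inv' _ (by omega))
    exact (h1.mul_right (ih (by omega))).mul_right h2

theorem comm_hi' (h : BD m r r') {X : E} (hX : ∀ i, 0 < i → i + 1 < m → Commute (r i) X)
    (i j : ℕ) (hij : i + 1 < j) (hj : j < m) : Commute (r i) (cp r r' X j) := by
  obtain ⟨n, rfl⟩ := Nat.exists_eq_add_of_le hij
  exact comm_hi h hX i n hj

/-- shift element -/
theorem sh_r (h : BD m r r') (j : ℕ) (hj : j + 2 < m) :
    SemiconjBy (r j * r (j + 1)) (r j) (r (j + 1)) := by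
  have := h.br j hj
  unfold SemiconjBy
  rw [this, ← mul_assoc]

theorem sh_r' (h : BD m r r') (j : ℕ) (hj : j + 2 < m) :
    SemiconjBy (r j * r (j + 1)) (r' j) (r' (j + 1)) :=
  semi_inv (sh_r h j hj) (h.inv _ (by omega)) (h.inv' _ (by omega)) (h.inv _ (by omega))
    (h.inv' _ (by omega))

theorem sh_cp (h : BD m r r') {X : E} (hX : ∀ i, 0 < i → i + 1 < m → Commute (r i) X)
    (j : ℕ) (hj : j + 2 < m) :
    SemiconjBy (r j * r (j + 1)) (cp r r' X j) (cp r r' X (j + 1)) := by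
  have hc : Commute (r (j + 1)) (cp r r' X j) := comm_lo h hX _ _ (by omega) (by omega)
  unfold SemiconjBy
  simp only [cp]
  have h1 := h.inv' j (by omega)
  rw [mul_assoc (r j) (r (j+1)), hc.eq]
  simp only [mul_assoc]
  rw [← mul_assoc (r' j), h1, one_mul]

theorem sh_cancel (h : BD m r r') (j : ℕ) (hj : j + 2 < m) {x y x' y' : E}
    (h1 : SemiconjBy (r j * r (j + 1)) x x') (h2 : SemiconjBy (r j * r (j + 1)) y y')
    (e : x = y) : x' = y' := by
  have : x' * (r j * r (j + 1)) = y' * (r j * r (j + 1)) := by rw [← h1.eq, ← h2.eq, e]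
  have hi1 : (r j * r (j+1)) * (r' (j+1) * r' j) = 1 := by
    rw [mul_assoc, ← mul_assoc (r (j+1)), h.inv (j+1) (by omega), one_mul, h.inv _ (by omega)]
  calc x' = x' * (r j * r (j + 1)) * (r' (j+1) * r' j) := by rw [mul_assoc, hi1, mul_one]
    _ = y' := by rw [this, mul_assoc, hi1, mul_one]

theorem sh_RE (h : BD m r r') {X : E} (hX : ∀ i, 0 < i → i + 1 < m → Commute (r i) X)
    (hRE : 1 < m → r 0 * X * r 0 * X = X * r 0 * X * r 0) (j : ℕ) (hj : j + 1 < m) :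
    r j * cp r r' X j * r j * cp r r' X j = cp r r' X j * r j * cp r r' X j * r j := by
  induction j with
  | zero => exact hRE hj
  | succ j ih =>
    have a := sh_r h j hj
    have b := sh_cp h hX j hj
    exact sh_cancel h j hj (((a.mul_right b).mul_right a).mul_right b)
      (((b.mul_right a).mul_right b).mul_right a) (ih (by omega))

theorem sh_DD (h : BD m r r') {X : E} (hX : ∀ i, 0 < i → i + 1 < m → Commute (r i) X)
    (hRE : 1 < m → r' 0 * X * r' 0 * X = X * r' 0 * X * r' 0) (j : ℕ) (hj : j + 1 < m) :
    r' j * cp r r' X j * r' j * cp r r' X j = cp r r' X j * r' j * cp r r' X j * r' j := by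
  induction j with
  | zero => exact hRE hj
  | succ j ih =>
    have a := sh_r' h j hj
    have b := sh_cp h hX j hj
    exact sh_cancel h j hj (((a.mul_right b).mul_right a).mul_right b)
      (((b.mul_right a).mul_right b).mul_right a) (ih (by omega))

theorem sh_perm (h : BD m r r') {X Y : E} (hX : ∀ i, 0 < i → i + 1 < m → Commute (r i) X)
    (hY : ∀ i, 0 < i → i + 1 < m → Commute (r i) Y)
    (hP : 1 < m → Y * r 0 * X = r 0 * X * r' 0 * Y * r' 0 + 1) (j : ℕ) (hj : j + 1 < m) :
    cp r r' Y j * r j * cp r r' X j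
      = r j * cp r r' X j * r' j * cp r r' Y j * r' j + 1 := by
  induction j with
  | zero => exact hP hj
  | succ j ih =>
    have a := sh_r h j hj
    have a' := sh_r' h j hj
    have b := sh_cp h hX j hj
    have c := sh_cp h hY j hj
    exact sh_cancel h j hj ((c.mul_right a).mul_right b)
      (((((a.mul_right b).mul_right a').mul_right c).mul_right a').add_right
        (SemiconjBy.one_right _)) (ih (by omega))

theorem cp_mul (h : BD m r r') (X Y : E) (j : ℕ) (hj : j < m) :
    cp r r' (X * Y) j = cp r r' X j * cp r r' Y j := by
  induction j with
  | zero => rfl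
  | succ j ih =>
    simp only [cp, ih (by omega)]
    have := h.inv' j hj
    simp only [mul_assoc]
    rw [← mul_assoc (r' j) (r j), this, one_mul]

/-- the up chain commutes with the braid generators -/
theorem up_comm (h : BD m r r') {X : E} (hX : ∀ i, 0 < i → i + 1 < m → Commute (r i) X)
    (hRE : 1 < m → r 0 * X * r 0 * X = X * r 0 * X * r 0) (i n : ℕ) (hn : i + 2 + n ≤ m) :
    Commute (r i) (up r r' X (i + 2 + n)) := by
  induction n with
  | zero =>
    have h1 : ∀ k, k ≤ i → Commute (r i) (up r r' X k) := by
      intro k hk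
      induction k with
      | zero => exact Commute.one_right _
      | succ k ih => exact (ih (by omega)).mul_right (comm_lo h hX _ _ (by omega) (by omega))
    have h2 : Commute (r i) (cp r r' X i * cp r r' X (i + 1)) := by
      have e := sh_RE h hX hRE i (by omega)
      unfold Commute SemiconjBy
      simp only [cp]
      have e' : r i * (cp r r' X i * (r i * cp r r' X i * r' i))
        = (r i * cp r r' X i * r i * cp r r' X i) * r' i := by simp only [mul_assoc]
      rw [e', e]
      simp only [mul_assoc]
      rw [h.inv i (by omega), h.inv' i (by omega)]
    have : up r r' X (i + 2 + 0) = up r r' X i * (cp r r' X i * cp r r' X (i + 1)) := by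
      simp only [Nat.add_zero, up, mul_assoc]
    rw [this]
    exact (h1 i le_rfl).mul_right h2
  | succ n ih =>
    exact (ih (by omega)).mul_right (comm_hi h hX i n (by omega))

variable [Algebra ℂ E] {q : ℂ}

theorem inv_absorb (hq : q ≠ 0) {a a' Z : E} (h : a' * a = 1) (hZ : a * Z = (-q⁻¹) • Z) :
    a' * Z = (-q) • Z := by
  have h1 : a' * (a * Z) = Z := by rw [← mul_assoc, h, one_mul]
  rw [hZ, mul_smul_comm] at h1
  calc a' * Z = (-q) • ((-q⁻¹) • (a' * Z)) := by
        rw [smul_smul]; simp [hq]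
    _ = _ := by rw [h1]

theorem cp_absorb (hq : q ≠ 0) (h : BD m r r') (X Z : E) (n : ℕ) : ∀ j, j + n < m →
    (∀ i, i < j + n → r i * Z = (-q⁻¹) • Z) →
    cp r r' X (j + n) * Z = ((-q) ^ n) • (rch r j n * (cp r r' X j * Z)) := by
  induction n with
  | zero => intro j _ _; simp [rch]
  | succ n ih =>
    intro j hj hZ
    have := ih (j + 1) (by omega) (fun i hi => hZ i (by omega))
    rw [show j + (n + 1) = j + 1 + n by omega, this]
    have h1 := inv_absorb hq (h.inv' j (by omega)) (hZ j (by omega))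
    simp only [cp, rch, mul_assoc, h1, mul_smul_comm, smul_smul, pow_succ]

theorem rch_comm (n : ℕ) (W : E) : ∀ j, (∀ i, j ≤ i → i < j + n → Commute (r i) W) →
    Commute (rch r j n) W := by
  induction n with
  | zero => intro j _; exact Commute.one_left _
  | succ n ih =>
    intro j hj
    exact (ih (j + 1) (fun i h1 h2 => hj i (by omega) (by omega))).mul_left
      (hj j le_rfl (by omega))

theorem rch_absorb (n : ℕ) (Z : E) : ∀ j, (∀ i, j ≤ i → i < j + n → r i * Z = (-q⁻¹) • Z) →
    rch r j n * Z = ((-q⁻¹) ^ n) • Z := by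
  induction n with
  | zero => intro j _; simp [rch]
  | succ n ih =>
    intro j hj
    rw [rch, mul_assoc, hj j le_rfl (by omega), mul_smul_comm,
      ih (j + 1) (fun i h1 h2 => hj i (by omega) (by omega)), smul_smul, pow_succ']

theorem dn_comm (h : BD m r r') {X : E} (hX : ∀ i, 0 < i → i + 1 < m → Commute (r i) X)
    (i j : ℕ) (hji : j ≤ i) (hi : i + 1 < m) : Commute (r i) (dn r r' X j) := by
  induction j with
  | zero => exact Commute.one_right _
  | succ j ih => exact (comm_lo h hX i j (by omega) hi).mul_right (ih (by omega))

/-- key induction -/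
theorem key (hq : q ≠ 0) (h : BD m r r') {X Y : E}
    (hX : ∀ i, 0 < i → i + 1 < m → Commute (r i) X)
    (hY : ∀ i, 0 < i → i + 1 < m → Commute (r i) Y)
    (hP : 1 < m → Y * r 0 * X = r 0 * X * r' 0 * Y * r' 0 + 1)
    (hDD : 1 < m → r' 0 * Y * r' 0 * Y = Y * r' 0 * Y * r' 0)
    (k : ℕ) (hk : k < m) (Z : E) (hZ : ∀ i, i < k → r i * Z = (-q⁻¹) • Z) (j : ℕ) :
    ∀ n, j + n = k →
    dn r r' Y j * (cp r r' X k * cp r r' Y k) * Z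
      = ((-q) ^ (k + j)) • (rch r j n * (cp r r' X j * (dn r r' Y (j + 1) * Z)))
        - (∑ i ∈ Finset.range j, q ^ (2 * i + 1)) • (dn r r' Y j * Z) := by
  induction j with
  | zero =>
    intro n hn
    have := cp_absorb hq h (X * Y) Z n 0 (by omega) (fun i hi => hZ i (by omega))
    rw [hn, cp_mul h X Y k hk] at this
    obtain rfl : n = k := by omega
    simp [dn, this, cp, mul_assoc]
  | succ j ih =>
    intro n hn
    have e := ih (n + 1) (by omega)
    have hc : Commute (rch r (j + 1) n) (cp r r' Y j) := rch_comm n _ _ fun i h1 h2 =>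
      comm_lo h hY i j (by omega) (by omega)
    have hW : rch r (j + 1) n * (dn r r' Y (j + 1) * Z)
        = ((-q⁻¹) ^ n) • (dn r r' Y (j + 1) * Z) := by
      apply rch_absorb
      intro i h1 h2
      rw [← mul_assoc, (dn_comm h hY i (j + 1) h1 (by omega)).eq, mul_assoc, hZ i (by omega),
        mul_smul_comm]
    have hp := sh_perm h hX hY hP j (by omega)
    have hd := sh_DD h hY hDD j (by omega)
    have hi := h.inv j (by omega)
    have hi' := h.inv' j (by omega)
    set x := cp r r' X j with hx
    set y := cp r r' Y j with hy
    have hjZ := hZ j (by omega)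
    have hjZ' := inv_absorb hq hi' hjZ
    have hdj : Commute (r j) (dn r r' Y j) := dn_comm h hY j j le_rfl (by omega)
    have hdj' : Commute (r' j) (dn r r' Y j) := (comm_inv hdj.symm hi hi').symm
    have e1 : cp r r' Y (j + 1) = r j * y * r' j := rfl
    have e2 : cp r r' X (j + 1) = r j * x * r' j := rfl
    have e3 : dn r r' Y (j + 1) = y * dn r r' Y j := rfl
    have e4 : dn r r' Y (j + 2) = cp r r' Y (j + 1) * (y * dn r r' Y j) := rfl
    have hPc : Commute (r' j) (r' j * y * r' j * y) := by
      unfold Commute SemiconjBy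
      nth_rewrite 1 [hd]
      simp only [mul_assoc]
    have hPe : cp r r' Y (j + 1) * y * (r' j * r' j) = r' j * y * r' j * y := by
      have : cp r r' Y (j + 1) * y = r j * r j * (r' j * y * r' j * y) := by
        rw [e1]
        calc r j * y * r' j * y = r j * (r j * r' j) * (y * r' j * y) := by
              rw [hi]; simp only [mul_assoc, mul_one]
          _ = _ := by simp only [mul_assoc]
      rw [this, mul_assoc, ← (hPc.mul_left hPc).eq]
      calc r j * r j * (r' j * r' j * (r' j * y * r' j * y))
          = r j * (r j * r' j) * r' j * (r' j * y * r' j * y) := by simp only [mul_assoc]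
        _ = _ := by rw [hi, mul_one, hi, one_mul]
    have hyy : y * (r' j * (y * (dn r r' Y j * Z))) = (-q) • (dn r r' Y (j + 2) * Z) := by
      calc y * (r' j * (y * (dn r r' Y j * Z)))
          = y * r' j * y * (r' j * r j) * (dn r r' Y j * Z) := by
            rw [hi']; simp only [mul_assoc, one_mul]
        _ = (y * r' j * y * r' j) * (r j * dn r r' Y j * Z) := by simp only [mul_assoc]
        _ = (cp r r' Y (j + 1) * y * (r' j * r' j)) * (dn r r' Y j * (r j * Z)) := by
            rw [← hd, hPe, hdj.eq, mul_assoc (dn r r' Y j)]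
        _ = (-q⁻¹) • (cp r r' Y (j + 1) * y * ((r' j * r' j) * dn r r' Y j * Z)) := by
            rw [hjZ, mul_smul_comm, mul_smul_comm]; simp only [mul_assoc]
        _ = (-q⁻¹) • (cp r r' Y (j + 1) * y * (dn r r' Y j * (r' j * (r' j * Z)))) := by
            rw [(hdj'.mul_left hdj').eq]; simp only [mul_assoc]
        _ = _ := by
            rw [hjZ', mul_smul_comm, hjZ', e4]
            simp only [mul_smul_comm, smul_smul, mul_assoc]
            congr 1
            field_simp
    have hmain : y * (rch r j (n + 1) * (x * (dn r r' Y (j + 1) * Z)))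
        = (-q) • (rch r (j + 1) n * (cp r r' X (j + 1) * (dn r r' Y (j + 2) * Z)))
          + ((-q⁻¹) ^ n) • (dn r r' Y (j + 1) * Z) := by
      calc y * (rch r j (n + 1) * (x * (dn r r' Y (j + 1) * Z)))
          = (y * rch r (j + 1) n) * (r j * x * (dn r r' Y (j + 1) * Z)) := by
            simp only [rch, mul_assoc]
        _ = rch r (j + 1) n * ((y * r j * x) * (dn r r' Y (j + 1) * Z)) := by
            rw [← hc.eq]; simp only [mul_assoc]
        _ = rch r (j + 1) n * (cp r r' X (j + 1) * (y * (r' j * (y * (dn r r' Y j * Z)))))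
            + rch r (j + 1) n * (dn r r' Y (j + 1) * Z) := by
            rw [hp, add_mul, one_mul, mul_add, e2, e3]; simp only [mul_assoc]
        _ = _ := by rw [hyy, hW, mul_smul_comm, mul_smul_comm]
    calc dn r r' Y (j + 1) * (cp r r' X k * cp r r' Y k) * Z
        = y * (dn r r' Y j * (cp r r' X k * cp r r' Y k) * Z) := by
          rw [e3]; simp only [mul_assoc]
      _ = _ := by
          rw [e, mul_sub, mul_smul_comm, mul_smul_comm, hmain, Finset.sum_range_succ, ← mul_assoc y,
            ← e3, smul_add, smul_smul, smul_smul, add_smul]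
          have c1 : (-q) ^ (k + j) * -q = (-q) ^ (k + (j + 1)) := by ring
          have c2 : (-q) ^ (k + j) * (-q⁻¹) ^ n = - q ^ (2 * j + 1) := by
            rw [show k + j = n + (2 * j + 1) by omega, pow_add, mul_right_comm, ← mul_pow]
            have : -q * -q⁻¹ = 1 := by field_simp
            rw [this, one_pow, one_mul, Odd.neg_pow ⟨j, rfl⟩]
          rw [c1, c2, neg_smul]
          abel

theorem qnum_sum (hq : q ≠ 0) (h2 : q - q⁻¹ ≠ 0) (k : ℕ) :
    ∑ i ∈ Finset.range k, q ^ (2 * i + 1) = q ^ k * ((q ^ k - q⁻¹ ^ k) / (q - q⁻¹)) := by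
  induction k with
  | zero => simp
  | succ k ih =>
    rw [Finset.sum_range_succ, ih]
    have h3 : q ^ 2 - 1 ≠ 0 := by
      intro h; apply h2; field_simp; rw [h, mul_zero]
    simp only [inv_pow]
    field_simp
    ring

/-- abstract Capelli chain -/
def capc {E : Type*} [Ring E] [Algebra ℂ E] (r r' : ℕ → E) (X : E) (c : ℕ → ℂ) : ℕ → E
  | 0 => 1
  | i + 1 => capc r r' X c i * (cp r r' X i + c i • 1)

theorem capelli_abs (hq : q ≠ 0) (h2 : q - q⁻¹ ≠ 0) (h : BD m r r') {X Y : E}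
    (hX : ∀ i, 0 < i → i + 1 < m → Commute (r i) X)
    (hY : ∀ i, 0 < i → i + 1 < m → Commute (r i) Y)
    (hP : 1 < m → Y * r 0 * X = r 0 * X * r' 0 * Y * r' 0 + 1)
    (hDD : 1 < m → r' 0 * Y * r' 0 * Y = Y * r' 0 * Y * r' 0)
    (k : ℕ) : k ≤ m → ∀ (Z : E), (∀ i, i + 1 < k → r i * Z = (-q⁻¹) • Z) →
    capc r r' (X * Y) (fun i => q ^ i * ((q ^ i - q⁻¹ ^ i) / (q - q⁻¹))) k * Z
      = (q ^ (k * (k - 1))) • (up r r' X k * (dn r r' Y k * Z)) := by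
  induction k with
  | zero => intro _ Z _; simp [capc, up, dn]
  | succ k ih =>
    intro hk Z hZ
    have hXY : ∀ i, 0 < i → i + 1 < m → Commute (r i) (X * Y) := fun i h1 h2 =>
      (hX i h1 h2).mul_right (hY i h1 h2)
    rw [capc, mul_assoc, ih (by omega)]
    · have := key hq h hX hY hP hDD k (by omega) Z (fun i hi => hZ i (by omega)) k 0 rfl
      rw [qnum_sum hq h2, mul_assoc] at this
      rw [add_mul, smul_mul_assoc, one_mul, mul_add, cp_mul h X Y k (by omega), this,
        mul_smul_comm, sub_add_cancel, mul_smul_comm, smul_smul, rch, one_mul, up]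
      simp only [mul_assoc]
      congr 1
      rw [← two_mul, pow_mul (-q), neg_sq, ← pow_mul q, ← pow_add]
      congr 1
      cases k with
      | zero => rfl
      | succ k => simp only [Nat.add_sub_cancel]; ring
    · intro i hi
      have c1 := comm_hi' h hXY i k hi (by omega)
      have c2 : Commute (r i) (cp r r' (X * Y) k + ((fun i => q ^ i * ((q ^ i - q⁻¹ ^ i) / (q - q⁻¹))) k) • (1 : E)) :=
        c1.add_right ((Commute.one_right _).smul_right _)
      rw [← mul_assoc, c2.eq, mul_assoc, hZ i (by omega), mul_smul_comm]

/-- abstract antisymmetrizers -/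
def asy {E : Type*} [Ring E] [Algebra ℂ E] (r : ℕ → E) (q : ℂ) (d : ℕ → ℂ) : ℕ → E
  | 0 => 1
  | 1 => 1
  | j + 2 => (d (j + 2))⁻¹ • (asy r q d (j + 1) *
      ((q ^ (j + 1)) • (1 : E) - (d (j + 1)) • r j) * asy r q d (j + 1))

theorem asy_comm (d : ℕ → ℂ) (W : E) (j : ℕ) (hW : ∀ i, i + 1 < j → Commute (r i) W) :
    Commute (asy r q d j) W := by
  induction j with
  | zero => exact Commute.one_left _
  | succ j ih =>
    cases j with
    | zero => exact Commute.one_left _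
    | succ j =>
      have a := ih (fun i hi => hW i (by omega))
      have b := hW j (by omega)
      have c : Commute ((q ^ (j + 1)) • (1 : E) - (d (j + 1)) • r j) W :=
        ((Commute.one_left _).smul_left _).sub_left (b.smul_left _)
      exact ((a.mul_left c).mul_left a).smul_left _

theorem asy_R {A B s t : E} {c Q dd : ℂ} (hA : c • A = Q • B - dd • (B * t * B))
    (hI : A * A = A)
    (hAB : A * B = A) (hB : Commute s B) (hr : A * t = (-q⁻¹) • A)
    (hbr : s * t * s = t * s * t) (hH : (q • 1 - s) * (q⁻¹ • 1 + s) = 0) :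
    A * ((q * Q) • (1 : E) - c • s) * A * (q⁻¹ • 1 + s) = 0 := by
  have hAA : A * ((q * Q) • (1 : E) - c • s) * A
      = Q • (A * (q • 1 - s)) + dd • (A * (s * t) * B) := by
    have : A * s * (c • A) = Q • (A * s) - dd • (A * (s * t) * B) := by
      rw [hA, mul_sub, mul_smul_comm, mul_smul_comm]
      have e1 : A * s * B = A * s := by rw [mul_assoc, hB.eq, ← mul_assoc, hAB]
      rw [e1, ← mul_assoc (A * s), ← mul_assoc (A * s), e1]
      simp only [mul_assoc]
    rw [← sub_eq_zero, ← sub_eq_zero.mpr this.symm]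
    simp only [mul_sub, sub_mul, mul_smul_comm, smul_mul_assoc, mul_one, hI, smul_sub, smul_smul]
    rw [mul_comm q Q]
    simp only [mul_assoc]
    abel
  have hBc : Commute B (q⁻¹ • 1 + s) := ((Commute.one_right _).smul_right _).add_right hB.symm
  have h0 : A * (s * t) * (q⁻¹ • 1 + s) = 0 := by
    rw [mul_add, mul_assoc A (s * t) s, hbr, mul_assoc t, ← mul_assoc A t, hr, mul_smul_comm, mul_one]
    simp only [neg_mul, smul_mul_assoc, neg_smul, add_neg_cancel]
  rw [hAA, add_mul, smul_mul_assoc, smul_mul_assoc, mul_assoc, hH, mul_assoc _ B, hBc.eq,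
    ← mul_assoc, h0]
  simp

theorem asy_L {A B s t : E} {c Q dd : ℂ} (hA : c • A = Q • B - dd • (B * t * B))
    (hI : A * A = A)
    (hAB : B * A = A) (hB : Commute s B) (hr : t * A = (-q⁻¹) • A)
    (hbr : s * t * s = t * s * t) (hH : (q⁻¹ • 1 + s) * (q • 1 - s) = 0) :
    (q⁻¹ • 1 + s) * (A * ((q * Q) • (1 : E) - c • s) * A) = 0 := by
  have hAA : A * ((q * Q) • (1 : E) - c • s) * A
      = Q • ((q • 1 - s) * A) + dd • (B * (t * s) * A) := by
    have : (c • A) * (s * A) = Q • (s * A) - dd • (B * (t * s) * A) := by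
      rw [hA, sub_mul, smul_mul_assoc, smul_mul_assoc]
      have e1 : B * (s * A) = s * A := by rw [← mul_assoc, ← hB.eq, mul_assoc, hAB]
      rw [mul_assoc (B * t), e1]
      simp only [mul_assoc]
    rw [← sub_eq_zero, ← sub_eq_zero.mpr this.symm]
    simp only [mul_sub, sub_mul, mul_smul_comm, smul_mul_assoc, mul_one, one_mul, hI, smul_sub,
      smul_smul]
    rw [mul_comm q Q]
    simp only [mul_assoc]
    abel
  have hBc : Commute (q⁻¹ • 1 + s) B := ((Commute.one_left _).smul_left _).add_left hB
  have h0 : (q⁻¹ • 1 + s) * (t * s * A) = 0 := by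
    rw [add_mul, ← mul_assoc s, ← mul_assoc s, hbr, mul_assoc _ t A, hr, mul_smul_comm,
      smul_mul_assoc, one_mul]
    simp only [neg_smul, add_neg_cancel]
  rw [hAA, mul_add, mul_smul_comm, mul_smul_comm, ← mul_assoc, hH, mul_assoc B, ← mul_assoc _ B,
    hBc.eq, mul_assoc, h0]
  simp

theorem asy_main (hq : q ≠ 0) (d : ℕ → ℂ) (hd1 : d 1 = 1)
    (hd : ∀ j, q ^ j + q⁻¹ * d j = d (j + 1)) (hd0 : ∀ j, 2 ≤ j → j ≤ m → d j ≠ 0)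
    (h : BD m r r')
    (hH : ∀ i, i + 1 < m → (q • 1 - r i) * (q⁻¹ • 1 + r i) = 0) (j : ℕ) : j ≤ m →
    (asy r q d j * asy r q d j = asy r q d j ∧
     asy r q d j * asy r q d (j - 1) = asy r q d j ∧
     asy r q d (j - 1) * asy r q d j = asy r q d j ∧
     asy r q d (j - 1) * asy r q d (j - 1) = asy r q d (j - 1) ∧
     ∀ i, i + 1 < j → r i * asy r q d j = (-q⁻¹) • asy r q d j ∧
      asy r q d j * r i = (-q⁻¹) • asy r q d j) := by
  induction j with
  | zero => intro _; simp [asy]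
  | succ j ih =>
    intro hj
    obtain ⟨a1, a2, a3, a5, a4⟩ := ih (by omega)
    cases j with
    | zero => simp [asy]
    | succ j =>
      simp only [Nat.add_sub_cancel] at a2 a3 a5 ⊢
      have hdd := hd0 (j + 2) (by omega) hj
      have eA : asy r q d (j + 2) = (d (j + 2))⁻¹ • (asy r q d (j + 1) *
          ((q ^ (j + 1)) • (1 : E) - (d (j + 1)) • r j) * asy r q d (j + 1)) := rfl
      have hHj := hH j (by omega)
      have hHj' : (q⁻¹ • 1 + r j) * (q • 1 - r j) = 0 := by
        rw [← hHj]
        simp only [mul_add, add_mul, mul_sub, sub_mul, smul_mul_assoc, mul_smul_comm, one_mul,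
          mul_one, smul_add, smul_sub]
        rw [smul_comm]; abel
      have p2 : asy r q d (j + 2) * asy r q d (j + 1) = asy r q d (j + 2) := by
        rw [eA, smul_mul_assoc, mul_assoc _ _ (asy r q d (j + 1)), a1]
      have p3 : asy r q d (j + 1) * asy r q d (j + 2) = asy r q d (j + 2) := by
        rw [eA, mul_smul_comm, ← mul_assoc, ← mul_assoc, a1]
      have pR : asy r q d (j + 2) * (q⁻¹ • 1 + r j) = 0 := by
        rw [eA]
        cases j with
        | zero =>
          simp only [asy, one_mul, mul_one, hd1, one_smul, zero_add, pow_one, smul_mul_assoc, hHj,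
            smul_zero]
        | succ j =>
          have hdc := hd0 (j + 2) (by omega) (by omega)
          have hB : Commute (r (j + 1)) (asy r q d (j + 1)) :=
            (asy_comm d _ _ fun i hi => h.far i (j + 1) (by omega) (by omega)).symm
          rw [smul_mul_assoc, pow_succ', asy_R (hB := hB) (hbr := (h.br j (by omega)).symm)
            (hr := (a4 j (by omega)).2) (hH := hHj) (hAB := a2) (hI := a1) (dd := d (j + 1)) (hA := ?_),
            smul_zero]
          nth_rewrite 1 [show asy r q d (j + 2) = (d (j + 2))⁻¹ • (asy r q d (j + 1) *
            ((q ^ (j + 1)) • (1 : E) - (d (j + 1)) • r j) * asy r q d (j + 1)) from rfl]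
          rw [smul_smul, mul_inv_cancel₀ hdc, one_smul, mul_sub, sub_mul, mul_smul_comm,
            smul_mul_assoc, mul_one, a5]
          simp only [mul_smul_comm, smul_mul_assoc]
      have pL : (q⁻¹ • 1 + r j) * asy r q d (j + 2) = 0 := by
        rw [eA]
        cases j with
        | zero =>
          simp only [asy, one_mul, mul_one, hd1, one_smul, zero_add, pow_one, mul_smul_comm, hHj',
            smul_zero]
        | succ j =>
          have hdc := hd0 (j + 2) (by omega) (by omega)
          have hB : Commute (r (j + 1)) (asy r q d (j + 1)) :=
            (asy_comm d _ _ fun i hi => h.far i (j + 1) (by omega) (by omega)).symm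
          rw [mul_smul_comm, pow_succ', asy_L (hB := hB) (hbr := (h.br j (by omega)).symm)
            (hr := (a4 j (by omega)).1) (hH := hHj') (hAB := a3) (hI := a1) (dd := d (j + 1)) (hA := ?_),
            smul_zero]
          nth_rewrite 1 [show asy r q d (j + 2) = (d (j + 2))⁻¹ • (asy r q d (j + 1) *
            ((q ^ (j + 1)) • (1 : E) - (d (j + 1)) • r j) * asy r q d (j + 1)) from rfl]
          rw [smul_smul, mul_inv_cancel₀ hdc, one_smul, mul_sub, sub_mul, mul_smul_comm,
            smul_mul_assoc, mul_one, a5]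
          simp only [mul_smul_comm, smul_mul_assoc]
      have pR' : asy r q d (j + 2) * r j = (-q⁻¹) • asy r q d (j + 2) := by
        rw [mul_add, mul_smul_comm, mul_one] at pR
        rw [neg_smul]; exact (neg_eq_of_add_eq_zero_right pR).symm
      have pL' : r j * asy r q d (j + 2) = (-q⁻¹) • asy r q d (j + 2) := by
        rw [add_mul, smul_mul_assoc, one_mul] at pL
        rw [neg_smul]; exact (neg_eq_of_add_eq_zero_right pL).symm
      refine ⟨?_, p2, p3, a1, ?_⟩
      · nth_rewrite 2 [eA]
        rw [mul_smul_comm, ← mul_assoc, ← mul_assoc, p2, mul_sub, mul_smul_comm, mul_smul_comm,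
          mul_one, pR', smul_smul, ← sub_smul, smul_mul_assoc, p2, smul_smul,
          show q ^ (j + 1) - d (j + 1) * -q⁻¹ = d (j + 2) by rw [← hd (j + 1)]; ring,
          inv_mul_cancel₀ hdd, one_smul]
      · intro i hi
        rcases Nat.lt_or_ge (i + 1) (j + 1) with hlt | hge
        · obtain ⟨b1, b2⟩ := a4 i hlt
          constructor
          · rw [← p3, ← mul_assoc, b1, smul_mul_assoc]
          · rw [← p2, mul_assoc, b2, mul_smul_comm]
        · obtain rfl : i = j := by omega
          exact ⟨pL', pR'⟩
end Cap6

namespace Cap6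

theorem skew_inv_apply {N : ℕ} {R Ψ : RMat N} (hΨ : SkewInv R Ψ) (V W : Fin N → Fin N → ℂ)
    (h : ∀ b d, ∑ a, ∑ c, V a c * R (a, b) (c, d) = W b d) (a' c' : Fin N) :
    V a' c' = ∑ b, ∑ d, W b d * Ψ (d, c') (b, a') := by
  simp_rw [← h, Finset.sum_mul]
  calc V a' c' = ∑ a, ∑ c, V a c * (if a = a' ∧ c' = c then 1 else 0) := by
        rw [Finset.sum_eq_single a', Finset.sum_eq_single c']
        · simp
        · intro c _ hc; simp [Ne.symm hc]
        · simp
        · intro a _ ha; simp [ha]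
        · simp
    _ = ∑ a, ∑ c, ∑ b, ∑ d, V a c * R (a, b) (c, d) * Ψ (d, c') (b, a') := by
        refine Finset.sum_congr rfl fun a _ => Finset.sum_congr rfl fun c _ => ?_
        rw [← hΨ a c c' a', Finset.mul_sum]
        refine Finset.sum_congr rfl fun b _ => ?_
        rw [Finset.mul_sum]
        refine Finset.sum_congr rfl fun d _ => ?_
        rw [mul_assoc]
    _ = ∑ p : Fin N × Fin N, ∑ r : Fin N × Fin N,
          V p.1 p.2 * R (p.1, r.1) (p.2, r.2) * Ψ (r.2, c') (r.1, a') := by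
        simp only [Fintype.sum_prod_type]
    _ = ∑ r : Fin N × Fin N, ∑ p : Fin N × Fin N,
          V p.1 p.2 * R (p.1, r.1) (p.2, r.2) * Ψ (r.2, c') (r.1, a') := Finset.sum_comm
    _ = _ := by simp only [Fintype.sum_prod_type]

theorem skew_left {N : ℕ} {R Ψ : RMat N} (hΨ : SkewInv R Ψ) (j b j' b' : Fin N) :
    ∑ d, ∑ c, Ψ (b, c) (j, d) * R (d, j') (c, b') = if j = j' ∧ b = b' then 1 else 0 := by
  let Rh : RMat N := fun p r => R (p.1, r.1) (p.2, r.2)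
  let Ph : RMat N := fun p r => Ψ (p.2, r.2) (p.1, r.1)
  have h1 : Rh * Ph = 1 := by
    ext ⟨i, a⟩ ⟨d, c⟩
    rw [Matrix.mul_apply, Fintype.sum_prod_type]
    have := hΨ i a c d
    simp only [Rh, Ph]
    rw [this, Matrix.one_apply]
    simp only [Prod.mk.injEq, eq_comm (a := c)]
  have h2 : Ph * Rh = 1 := mul_eq_one_comm.mp h1
  have := congrFun (congrFun h2 (j, b)) (j', b')
  rw [Matrix.mul_apply, Fintype.sum_prod_type, Matrix.one_apply] at this
  simpa [Rh, Ph] using this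

theorem C_trace {N : ℕ} {R Ψ : RMat N} (hΨ : SkewInv R Ψ) (j b : Fin N) :
    ∑ d, ∑ c, Cmat Ψ c d * R (d, j) (c, b) = if j = b then 1 else 0 := by
  simp only [Cmat, Finset.sum_mul]
  calc ∑ d, ∑ c, ∑ i, Ψ (i, c) (i, d) * R (d, j) (c, b)
      = ∑ p : Fin N × Fin N, ∑ i, Ψ (i, p.2) (i, p.1) * R (p.1, j) (p.2, b) := by
        simp only [Fintype.sum_prod_type]
    _ = ∑ i, ∑ p : Fin N × Fin N, Ψ (i, p.2) (i, p.1) * R (p.1, j) (p.2, b) := Finset.sum_comm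
    _ = ∑ i, if i = j ∧ i = b then 1 else 0 := by
        simp only [Fintype.sum_prod_type, skew_left hΨ]
    _ = _ := by
        rw [Finset.sum_eq_single j]
        · simp
        · intro i _ hi; simp [hi]
        · simp

theorem C_conj {N : ℕ} {R Ψ P Q : RMat N} (hΨ : SkewInv R Ψ) (hQP : Q * P = 1)
    (hYB : ∀ a b u x f v, ∑ c, ∑ d, ∑ e, P (a, b) (c, d) * R (d, u) (e, v) * Q (c, e) (x, f)
      = ∑ s, ∑ t, ∑ w, Q (b, u) (s, t) * R (a, s) (x, w) * P (w, t) (f, v))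
    (b f d e : Fin N) :
    ∑ x, ∑ a, ∑ c, Cmat Ψ x a * P (a, b) (c, d) * Q (c, e) (x, f)
      = if b = f then Cmat Ψ e d else 0 := by
  have key : ∀ u v, ∑ d, ∑ e, (∑ x, ∑ a, ∑ c, Cmat Ψ x a * P (a, b) (c, d) * Q (c, e) (x, f))
      * R (d, u) (e, v) = if b = f ∧ u = v then 1 else 0 := by
    intro u v
    calc _ = ∑ p : Fin N × Fin N, ∑ r : Fin N × Fin N × Fin N,
            Cmat Ψ r.1 r.2.1 * P (r.2.1, b) (r.2.2, p.1) * Q (r.2.2, p.2) (r.1, f)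
              * R (p.1, u) (p.2, v) := by
          simp only [Fintype.sum_prod_type, Finset.sum_mul]
      _ = ∑ r : Fin N × Fin N × Fin N, ∑ p : Fin N × Fin N,
            Cmat Ψ r.1 r.2.1 * P (r.2.1, b) (r.2.2, p.1) * Q (r.2.2, p.2) (r.1, f)
              * R (p.1, u) (p.2, v) := Finset.sum_comm
      _ = ∑ x, ∑ a, Cmat Ψ x a * ∑ c, ∑ d, ∑ e,
            P (a, b) (c, d) * R (d, u) (e, v) * Q (c, e) (x, f) := by
          simp only [Fintype.sum_prod_type, Finset.mul_sum]
          refine Finset.sum_congr rfl fun x _ => Finset.sum_congr rfl fun a _ =>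
            Finset.sum_congr rfl fun c _ => Finset.sum_congr rfl fun d _ =>
            Finset.sum_congr rfl fun e _ => by ring
      _ = ∑ p : Fin N × Fin N, ∑ r : Fin N × Fin N × Fin N,
            Q (b, u) (r.1, r.2.1) * P (r.2.2, r.2.1) (f, v)
             * (Cmat Ψ p.2 p.1 * R (p.1, r.1) (p.2, r.2.2)) := by
          simp only [hYB, Fintype.sum_prod_type, Finset.mul_sum]
          rw [Finset.sum_comm]
          refine Finset.sum_congr rfl fun x _ => Finset.sum_congr rfl fun a _ =>
            Finset.sum_congr rfl fun c _ => Finset.sum_congr rfl fun d _ =>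
            Finset.sum_congr rfl fun e _ => by ring
      _ = ∑ r : Fin N × Fin N × Fin N, ∑ p : Fin N × Fin N,
            Q (b, u) (r.1, r.2.1) * P (r.2.2, r.2.1) (f, v)
             * (Cmat Ψ p.2 p.1 * R (p.1, r.1) (p.2, r.2.2)) := Finset.sum_comm
      _ = ∑ s, ∑ t, Q (b, u) (s, t) * P (s, t) (f, v) := by
          simp only [← Finset.mul_sum, Fintype.sum_prod_type, C_trace hΨ]
          simp
      _ = _ := by
          have := congrFun (congrFun hQP (b, u)) (f, v)
          rw [Matrix.mul_apply, Fintype.sum_prod_type, Matrix.one_apply] at this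
          rw [this]; simp
  have := skew_inv_apply hΨ
    (fun d e => ∑ x, ∑ a, ∑ c, Cmat Ψ x a * P (a, b) (c, d) * Q (c, e) (x, f))
    (fun u v => if b = f ∧ u = v then 1 else 0) key d e
  rw [this]
  by_cases hbf : b = f <;> simp [hbf, Cmat]

theorem C_comm_aux {N : ℕ} {R Rinv Ψ : RMat N} (hΨ : SkewInv R Ψ) (h1 : R * Rinv = 1)
    (h2 : Rinv * R = 1)
    (hY1 : ∀ a b u x f v, ∑ c, ∑ d, ∑ e, R (a, b) (c, d) * R (d, u) (e, v) * Rinv (c, e) (x, f)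
      = ∑ s, ∑ t, ∑ w, Rinv (b, u) (s, t) * R (a, s) (x, w) * R (w, t) (f, v))
    (hY2 : ∀ a b u x f v, ∑ c, ∑ d, ∑ e, Rinv (a, b) (c, d) * R (d, u) (e, v) * R (c, e) (x, f)
      = ∑ s, ∑ t, ∑ w, R (b, u) (s, t) * R (a, s) (x, w) * Rinv (w, t) (f, v))
    (x y c d : Fin N) :
    ∑ a, ∑ b, Cmat Ψ x a * Cmat Ψ y b * Rinv (a, b) (c, d)
      = ∑ a, ∑ b, Rinv (x, y) (a, b) * (Cmat Ψ a c * Cmat Ψ b d) := by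
  have g1 := C_conj hΨ h2 hY1
  have g2 := C_conj hΨ h1 hY2
  have al : ∀ c e a f, ∑ x, Cmat Ψ x a * Rinv (c, e) (x, f) = ∑ d, Cmat Ψ e d * Ψ (d, c) (f, a) := by
    intro c e a f
    have := skew_inv_apply hΨ (fun a c => ∑ x, Cmat Ψ x a * Rinv (c, e) (x, f))
      (fun b d => if b = f then Cmat Ψ e d else 0) (by
        intro b d
        rw [← g1 b f d e]
        simp only [Finset.sum_mul]
        conv_rhs => rw [Finset.sum_comm]
        refine Finset.sum_congr rfl fun a _ => ?_
        conv_rhs => rw [Finset.sum_comm]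
        refine Finset.sum_congr rfl fun c _ => Finset.sum_congr rfl fun x _ => by ring) a c
    rw [this, Finset.sum_eq_single f]
    · simp
    · intro b _ hb; simp [hb]
    · simp
  have be : ∀ x b c d, ∑ a, Cmat Ψ x a * Rinv (a, b) (c, d) = ∑ e, Cmat Ψ e d * Ψ (b, x) (e, c) := by
    intro x b c d
    have := skew_inv_apply hΨ (fun c x => ∑ a, Cmat Ψ x a * Rinv (a, b) (c, d))
      (fun e f => if b = f then Cmat Ψ e d else 0) (by
        intro e f
        rw [← g2 b f d e]
        simp only [Finset.sum_mul]
        rw [Finset.sum_comm]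
        refine Finset.sum_congr rfl fun x _ => ?_
        rw [Finset.sum_comm]) c x
    rw [this]
    refine Finset.sum_congr rfl fun e _ => ?_
    rw [Finset.sum_eq_single b]
    · simp
    · intro f _ hb; simp [Ne.symm hb]
    · simp
  calc ∑ a, ∑ b, Cmat Ψ x a * Cmat Ψ y b * Rinv (a, b) (c, d)
      = ∑ b, Cmat Ψ y b * ∑ a, Cmat Ψ x a * Rinv (a, b) (c, d) := by
        rw [Finset.sum_comm]; simp only [Finset.mul_sum]
        refine Finset.sum_congr rfl fun a _ => Finset.sum_congr rfl fun b _ => by ring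
    _ = ∑ b, Cmat Ψ y b * ∑ e, Cmat Ψ e d * Ψ (b, x) (e, c) := by simp only [be]
    _ = ∑ f, Cmat Ψ f d * ∑ b, Cmat Ψ y b * Ψ (b, x) (f, c) := by
        simp only [Finset.mul_sum]
        rw [Finset.sum_comm]
        refine Finset.sum_congr rfl fun a _ => Finset.sum_congr rfl fun b _ => by ring
    _ = ∑ f, Cmat Ψ f d * ∑ a, Cmat Ψ a c * Rinv (x, y) (a, f) := by simp only [al]
    _ = _ := by
        simp only [Finset.mul_sum]
        rw [Finset.sum_comm]
        refine Finset.sum_congr rfl fun a _ => Finset.sum_congr rfl fun b _ => by ring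

/-- triples -/
def e3 (N : ℕ) : (Fin N × Fin N × Fin N) ≃ (Fin 3 → Fin N) where
  toFun p := ![p.1, p.2.1, p.2.2]
  invFun f := (f 0, f 1, f 2)
  left_inv p := rfl
  right_inv f := by funext i; fin_cases i <;> rfl

theorem sum3 {N : ℕ} (F : (Fin 3 → Fin N) → ℂ) : ∑ f, F f = ∑ a, ∑ b, ∑ c, F ![a, b, c] := by
  rw [← (e3 N).sum_comp, Fintype.sum_prod_type]
  simp only [Fintype.sum_prod_type]; rfl

theorem emb30 {N : ℕ} (R : RMat N) (a b c a' b' c' : Fin N) :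
    embR 3 R 0 ![a, b, c] ![a', b', c'] = if c = c' then R (a, b) (a', b') else 0 := by
  unfold embR
  have : (∀ j : Fin 3, j.val ≠ 0 → j.val ≠ 0 + 1 → (![a, b, c] : Fin 3 → Fin N) j = ![a', b', c'] j)
    ↔ c = c' := by
    constructor
    · intro h; exact h 2 (by decide) (by decide)
    · intro h j; fin_cases j <;> simp [h]
  simp only [this]
  rfl

theorem emb31 {N : ℕ} (R : RMat N) (a b c a' b' c' : Fin N) :
    embR 3 R 1 ![a, b, c] ![a', b', c'] = if a = a' then R (b, c) (b', c') else 0 := by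
  unfold embR
  have : (∀ j : Fin 3, j.val ≠ 1 → j.val ≠ 1 + 1 → (![a, b, c] : Fin 3 → Fin N) j = ![a', b', c'] j)
    ↔ a = a' := by
    constructor
    · intro h; exact h 0 (by decide) (by decide)
    · intro h j; fin_cases j <;> simp [h]
  simp only [this]
  rfl

theorem prod010 {N : ℕ} (P Q S : RMat N) (a b u x f v : Fin N) :
    (embR 3 P 0 * embR 3 Q 1 * embR 3 S 0) ![a, b, u] ![x, f, v]
     = ∑ c, ∑ d, ∑ e, P (a, b) (c, d) * Q (d, u) (e, v) * S (c, e) (x, f) := by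
  rw [mul_assoc]
  simp only [Matrix.mul_apply, sum3, emb30, emb31]
  simp [Finset.mul_sum, mul_assoc]

theorem prod101 {N : ℕ} (P Q S : RMat N) (a b u x f v : Fin N) :
    (embR 3 P 1 * embR 3 Q 0 * embR 3 S 1) ![a, b, u] ![x, f, v]
     = ∑ s, ∑ t, ∑ w, P (b, u) (s, t) * Q (a, s) (x, w) * S (w, t) (f, v) := by
  rw [mul_assoc]
  simp only [Matrix.mul_apply, sum3, emb30, emb31]
  simp [Finset.mul_sum, mul_assoc]

end Cap6

namespace Cap6

open Classical in
/-- matrix acting in the window `ι` -/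
def wm {N w k : ℕ} {A : Type*} [Ring A] (ι : Fin w → Fin k) (X : TMat N w A) : TMat N k A :=
  fun f g => if (∀ j, j ∉ Set.range ι → f j = g j) then X (f ∘ ι) (g ∘ ι) else 0

section
variable {N w k : ℕ} {A : Type*} [Ring A] {ι : Fin w → Fin k}

theorem ext_comp (hι : Function.Injective ι) (a : Fin w → Fin N) (f : Fin k → Fin N) :
    Function.extend ι a f ∘ ι = a := by
  funext i; simp [hι.extend_apply]

theorem ext_off (a : Fin w → Fin N) (f : Fin k → Fin N) {j : Fin k} (hj : j ∉ Set.range ι) :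
    Function.extend ι a f j = f j :=
  Function.extend_apply' _ _ _ (by simpa using hj)

theorem ext_eq (hι : Function.Injective ι) (f h : Fin k → Fin N)
    (hh : ∀ j, j ∉ Set.range ι → f j = h j) : Function.extend ι (h ∘ ι) f = h := by
  funext j
  by_cases hj : j ∈ Set.range ι
  · obtain ⟨i, rfl⟩ := hj
    rw [hι.extend_apply]; rfl
  · rw [ext_off _ _ hj, hh j hj]

open Classical in
theorem sum_win {B : Type*} [AddCommMonoid B] (hι : Function.Injective ι) (f : Fin k → Fin N)
    (F : (Fin k → Fin N) → B) :
    ∑ h, (if (∀ j, j ∉ Set.range ι → f j = h j) then F h else 0)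
      = ∑ a : Fin w → Fin N, F (Function.extend ι a f) := by
  rw [← Finset.sum_filter]
  symm
  refine Finset.sum_nbij' (fun a => Function.extend ι a f) (fun h => h ∘ ι) ?_ ?_ ?_ ?_ ?_
  · intro a _
    simp only [Finset.mem_filter, Finset.mem_univ, true_and]
    intro j hj; rw [ext_off _ _ hj]
  · intro h _; exact Finset.mem_univ _
  · intro a _; exact ext_comp hι a f
  · intro h hh
    simp only [Finset.mem_filter, Finset.mem_univ, true_and] at hh
    exact ext_eq hι f h hh
  · intro a _; rfl

theorem wm_mul_apply (hι : Function.Injective ι) (X : TMat N w A) (Z : TMat N k A)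
    (f g : Fin k → Fin N) :
    (wm ι X * Z) f g = ∑ a, X (f ∘ ι) a * Z (Function.extend ι a f) g := by
  classical
  rw [Matrix.mul_apply]
  have := sum_win hι f (fun h => X (f ∘ ι) (h ∘ ι) * Z h g)
  simp only [ext_comp hι] at this
  rw [← this]
  refine Finset.sum_congr rfl fun h _ => ?_
  unfold wm
  split_ifs <;> simp

theorem mul_wm_apply (hι : Function.Injective ι) (X : TMat N w A) (Z : TMat N k A)
    (f g : Fin k → Fin N) :
    (Z * wm ι X) f g = ∑ a, Z f (Function.extend ι a g) * X a (g ∘ ι) := by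
  classical
  rw [Matrix.mul_apply]
  have := sum_win hι g (fun h => Z f h * X (h ∘ ι) (g ∘ ι))
  simp only [ext_comp hι] at this
  rw [← this]
  refine Finset.sum_congr rfl fun h _ => ?_
  unfold wm
  simp only [eq_comm (a := g _)]
  split_ifs <;> simp

theorem wm_mul (hι : Function.Injective ι) (X Y : TMat N w A) :
    wm ι (X * Y) = wm ι X * wm ι Y := by
  classical
  ext f g
  rw [wm_mul_apply hι]
  unfold wm
  have : ∀ a : Fin w → Fin N, (∀ j, j ∉ Set.range ι → Function.extend ι a f j = g j) ↔
      (∀ j, j ∉ Set.range ι → f j = g j) := by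
    intro a
    refine forall_congr' fun j => forall_congr' fun hj => ?_
    rw [ext_off _ _ hj]
  simp only [this, ext_comp hι]
  split_ifs
  · rw [Matrix.mul_apply]
  · simp

theorem wm_one : wm ι (1 : TMat N w A) = 1 := by
  classical
  ext f g
  unfold wm
  by_cases hfg : f = g
  · subst hfg; simp
  · rw [Matrix.one_apply_ne hfg]
    split_ifs with h
    · rw [Matrix.one_apply_ne]
      intro h2
      apply hfg
      funext j
      by_cases hj : j ∈ Set.range ι
      · obtain ⟨i, rfl⟩ := hj
        exact congrFun h2 i
      · exact h j hj
    · rfl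

/-- window embedding as a ring hom -/
def wh (ι : Fin w → Fin k) (hι : Function.Injective ι) : TMat N w A →+* TMat N k A where
  toFun := wm ι
  map_one' := wm_one
  map_mul' := wm_mul hι
  map_zero' := by ext f g; simp [wm]
  map_add' X Y := by ext f g; simp only [wm, Matrix.add_apply]; split_ifs <;> simp

theorem wm_smul [Algebra ℂ A] (c : ℂ) (X : TMat N w A) : wm ι (c • X) = c • wm ι X := by
  ext f g; simp only [wm, Matrix.smul_apply]; split_ifs <;> simp

theorem wm_lift [Algebra ℂ A] (X : TMat N w ℂ) : liftC A (wm ι X) = wm ι (liftC A X) := by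
  ext f g; simp only [wm, liftC, Matrix.map_apply]; split_ifs <;> simp

theorem wm_comp {v : ℕ} (hι : Function.Injective ι) (κ : Fin v → Fin w) (X : TMat N v A) :
    wm ι (wm κ X) = wm (ι ∘ κ) X := by
  ext f g
  unfold wm
  rw [← ite_and]
  refine if_congr ?_ rfl rfl
  constructor
  · rintro ⟨h1, h2⟩ j hj
    by_cases hj' : j ∈ Set.range ι
    · obtain ⟨i, rfl⟩ := hj'
      apply h2 i
      rintro ⟨l, rfl⟩
      exact hj ⟨l, rfl⟩
    · exact h1 j hj'
  · intro h
    refine ⟨fun j hj => h j ?_, fun j hj => h (ι j) ?_⟩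
    · rintro ⟨l, rfl⟩; exact hj ⟨κ l, rfl⟩
    · rintro ⟨l, hl⟩; exact hj ⟨l, hι hl⟩

theorem wm_disj {v : ℕ} {κ : Fin v → Fin k} (hι : Function.Injective ι)
    (hd : ∀ i j, ι i ≠ κ j)
    (X : TMat N w A) (Y : TMat N v A) (f g : Fin k → Fin N) :
    (wm ι X * wm κ Y) f g = open Classical in
      if (∀ j, j ∉ Set.range ι → j ∉ Set.range κ → f j = g j)
      then X (f ∘ ι) (g ∘ ι) * Y (f ∘ κ) (g ∘ κ) else 0 := by
  classical
  rw [wm_mul_apply hι]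
  have hk : ∀ a : Fin w → Fin N, Function.extend ι a f ∘ κ = f ∘ κ := by
    intro a; funext j
    exact ext_off _ _ (by rintro ⟨i, hi⟩; exact hd i j hi)
  rw [Finset.sum_eq_single (g ∘ ι)]
  · unfold wm
    rw [hk, mul_ite, mul_zero]
    refine if_congr ?_ rfl rfl
    constructor
    · intro h j h1 h2
      rw [← h j h2, ext_off _ _ h1]
    · intro h j h2
      by_cases h1 : j ∈ Set.range ι
      · obtain ⟨i, rfl⟩ := h1
        rw [hι.extend_apply]; rfl
      · rw [ext_off _ _ h1, h j h1 h2]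
  · intro a _ ha
    unfold wm
    rw [if_neg, mul_zero]
    intro h
    apply ha
    funext i
    rw [← hι.extend_apply a f i]
    exact h _ (by rintro ⟨j, hj⟩; exact hd i j hj.symm)
  · simp

theorem wm_commute {v : ℕ} {κ : Fin v → Fin k} (hι : Function.Injective ι)
    (hκ : Function.Injective κ) (hd : ∀ i j, ι i ≠ κ j)
    (X : TMat N w A) (Y : TMat N v A) (hXY : ∀ a b c d, Commute (X a b) (Y c d)) :
    Commute (wm ι X) (wm κ Y) := by
  ext f g
  rw [wm_disj hι hd, wm_disj hκ (fun i j => (hd j i).symm)]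
  refine if_congr ?_ (hXY _ _ _ _).eq rfl
  exact ⟨fun h j a b => h j b a, fun h j a b => h j b a⟩

/-- tensor power of `C` -/
def Ct (k : ℕ) (C : Matrix (Fin N) (Fin N) ℂ) : TMat N k ℂ := fun f g => ∏ j, C (f j) (g j)

theorem Ct_split (hι : Function.Injective ι) (C : Matrix (Fin N) (Fin N) ℂ)
    (f g : Fin k → Fin N) :
    Ct k C f g = (∏ j ∈ (Finset.univ.image ι)ᶜ, C (f j) (g j)) * Ct w C (f ∘ ι) (g ∘ ι) := by
  unfold Ct
  rw [← Finset.prod_compl_mul_prod (Finset.univ.image ι), Finset.prod_image]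
  · rfl
  · intro a _ b _ h; exact hι h

theorem Ct_wm (hι : Function.Injective ι) (C : Matrix (Fin N) (Fin N) ℂ) (X : TMat N w ℂ)
    (h : Commute (Ct w C) X) : Commute (Ct k C) (wm ι X) := by
  ext f g
  rw [wm_mul_apply hι, mul_wm_apply hι]
  have h1 : ∀ a : Fin w → Fin N, Ct k C f (Function.extend ι a g)
      = (∏ j ∈ (Finset.univ.image ι)ᶜ, C (f j) (g j)) * Ct w C (f ∘ ι) a := by
    intro a
    rw [Ct_split hι, ext_comp hι]
    congr 1
    refine Finset.prod_congr rfl fun j hj => ?_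
    rw [ext_off _ _ (by simpa using hj)]
  have h2 : ∀ a : Fin w → Fin N, Ct k C (Function.extend ι a f) g
      = (∏ j ∈ (Finset.univ.image ι)ᶜ, C (f j) (g j)) * Ct w C a (g ∘ ι) := by
    intro a
    rw [Ct_split hι, ext_comp hι]
    congr 1
    refine Finset.prod_congr rfl fun j hj => ?_
    rw [ext_off _ _ (by simpa using hj)]
  have h3 := congrFun (congrFun h.eq (f ∘ ι)) (g ∘ ι)
  rw [Matrix.mul_apply, Matrix.mul_apply] at h3
  simp only [h1, h2, mul_assoc, mul_left_comm (X _ _), ← Finset.mul_sum, h3]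

theorem rTr_eq [Algebra ℂ A] (C : Matrix (Fin N) (Fin N) ℂ) (X : TMat N k A) :
    rTr C X = Matrix.trace (liftC A (Ct k C) * X) := by
  simp only [rTr, Matrix.trace, Matrix.diag, Matrix.mul_apply, liftC, Matrix.map_apply, Ct,
    Algebra.smul_def]

theorem trace_lift_comm [Algebra ℂ A] (S : TMat N k ℂ) (Z : TMat N k A) :
    Matrix.trace (liftC A S * Z) = Matrix.trace (Z * liftC A S) := by
  simp only [Matrix.trace, Matrix.diag, Matrix.mul_apply, liftC, Matrix.map_apply]
  rw [Finset.sum_comm]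
  refine Finset.sum_congr rfl fun a _ => Finset.sum_congr rfl fun b _ => ?_
  rw [Algebra.commutes]

theorem liftC_mul [Algebra ℂ A] (S T : TMat N k ℂ) : liftC A (S * T) = liftC A S * liftC A T :=
  map_mul ((algebraMap ℂ A).mapMatrix) S T

theorem liftC_smul [Algebra ℂ A] (c : ℂ) (S : TMat N k ℂ) :
    liftC A (c • S) = c • liftC A S := by
  ext f g
  simp only [liftC, Matrix.map_apply, Matrix.smul_apply, smul_eq_mul, map_mul]
  rw [Algebra.smul_def]

theorem rTr_cyc [Algebra ℂ A] (C : Matrix (Fin N) (Fin N) ℂ) (S : TMat N k ℂ)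
    (hS : Commute (Ct k C) S) (Z : TMat N k A) :
    rTr C (liftC A S * Z) = rTr C (Z * liftC A S) := by
  rw [rTr_eq, rTr_eq, ← mul_assoc, ← liftC_mul, hS.eq, liftC_mul, mul_assoc, trace_lift_comm,
    mul_assoc]

theorem rTr_left [Algebra ℂ A] (C : Matrix (Fin N) (Fin N) ℂ) (x : A) (Z : TMat N k A) :
    rTr C (x • Z) = x * rTr C Z := by
  simp only [rTr, Matrix.smul_apply, smul_eq_mul, Finset.mul_sum, mul_smul_comm]

theorem rTr_smul [Algebra ℂ A] (C : Matrix (Fin N) (Fin N) ℂ) (c : ℂ) (Z : TMat N k A) :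
    rTr C (c • Z) = c • rTr C Z := by
  simp only [rTr, Matrix.smul_apply, Finset.smul_sum]
  refine Finset.sum_congr rfl fun a _ => Finset.sum_congr rfl fun b _ => smul_comm _ _ _

theorem rTr_lift [Algebra ℂ A] (C : Matrix (Fin N) (Fin N) ℂ) (S : TMat N k ℂ) :
    rTr C (liftC A S) = algebraMap ℂ A (rTr C S) := by
  simp only [rTr, liftC, Matrix.map_apply, map_sum, smul_eq_mul, map_mul, Algebra.smul_def]

theorem rank_one (S : TMat N k ℂ) (h : S.rank = 1) :
    ∃ u v : (Fin k → Fin N) → ℂ, ∀ f g, S f g = u f * v g := by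
  unfold Matrix.rank at h
  obtain ⟨u, _, hu⟩ := finrank_eq_one_iff'.mp h
  have : ∀ g, ∃ c : ℂ, c • (u : (Fin k → Fin N) → ℂ) = S.mulVecLin (Pi.single g 1) := by
    intro g
    obtain ⟨c, hc⟩ := hu ⟨S.mulVecLin (Pi.single g 1), ⟨_, rfl⟩⟩
    exact ⟨c, congrArg Subtype.val hc⟩
  choose v hv using this
  refine ⟨u, v, fun f g => ?_⟩
  have := congrFun (hv g) f
  simp at this
  rw [← this, mul_comm]

theorem rank_one_sandwich [Algebra ℂ A] (S : TMat N k ℂ) (h : S.rank = 1) (Z : TMat N k A) :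
    ∃ x : A, liftC A S * Z * liftC A S = x • liftC A S := by
  obtain ⟨u, v, huv⟩ := rank_one S h
  refine ⟨∑ a, ∑ b, (v b * u a) • Z b a, ?_⟩
  ext f g
  simp only [Matrix.mul_apply, liftC, Matrix.map_apply, Matrix.smul_apply, huv, smul_eq_mul,
    Finset.sum_mul]
  refine Finset.sum_congr rfl fun a _ => Finset.sum_congr rfl fun b _ => ?_
  rw [← Algebra.commutes, ← Algebra.smul_def, ← Algebra.smul_def, ← Algebra.commutes,
    ← Algebra.smul_def, smul_smul, smul_smul]
  congr 1
  ring
end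
end Cap6

namespace Cap6
section
variable {N k : ℕ} {A : Type*} [Ring A]

/-- two-site matrix as a matrix on functions -/
def R2 (R : RMat N) : TMat N 2 ℂ := R.submatrix (finTwoArrowEquiv (Fin N)) (finTwoArrowEquiv (Fin N))

/-- one-site matrix as a matrix on functions -/
def X1 (X : Matrix (Fin N) (Fin N) A) : TMat N 1 A :=
  X.submatrix (Equiv.funUnique (Fin 1) (Fin N)) (Equiv.funUnique (Fin 1) (Fin N))

theorem R2_mul (R S : RMat N) : R2 (R * S) = R2 R * R2 S := by
  unfold R2; rw [Matrix.submatrix_mul_equiv]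

theorem R2_one : R2 (1 : RMat N) = 1 := by
  unfold R2
  exact Matrix.submatrix_one_equiv _

theorem X1_mul (R S : Matrix (Fin N) (Fin N) A) : X1 (R * S) = X1 R * X1 S := by
  unfold X1; rw [Matrix.submatrix_mul_equiv]

/-- window -/
def wi (w k i : ℕ) (h : i + w ≤ k) : Fin w → Fin k := fun x => ⟨i + x.val, by omega⟩

theorem wi_inj (w k i : ℕ) (h : i + w ≤ k) : Function.Injective (wi w k i h) := by
  intro a b hab
  simp only [wi, Fin.mk.injEq] at hab
  ext; omega

theorem embR_eq (R : RMat N) (i : ℕ) (h : i + 2 ≤ k) : embR k R i = wm (wi 2 k i h) (R2 R) := by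
  ext f g
  unfold embR wm
  rw [dif_pos (by omega)]
  have hc : (∀ j : Fin k, j.val ≠ i → j.val ≠ i + 1 → f j = g j) ↔
      (∀ j, j ∉ Set.range (wi 2 k i h) → f j = g j) := by
    refine forall_congr' fun j => ?_
    constructor
    · intro H hj
      refine H (fun e => hj ⟨0, ?_⟩) (fun e => hj ⟨1, ?_⟩)
      · ext; simp [wi, e]
      · ext; simp [wi, e]
    · intro H h1 h2
      apply H
      rintro ⟨x, rfl⟩
      fin_cases x
      · exact h1 (by simp [wi])
      · exact h2 (by simp [wi])
  exact if_congr hc rfl rfl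

theorem emb1_eq (X : Matrix (Fin N) (Fin N) A) (h : 0 + 1 ≤ k) :
    emb1 k X = wm (wi 1 k 0 h) (X1 X) := by
  ext f g
  unfold emb1 wm
  rw [dif_pos (by omega)]
  have hc : (∀ j : Fin k, j.val ≠ 0 → f j = g j) ↔
      (∀ j, j ∉ Set.range (wi 1 k 0 h) → f j = g j) := by
    refine forall_congr' fun j => ?_
    constructor
    · intro H hj
      refine H (fun e => hj ⟨0, ?_⟩)
      ext; simp [wi, e]
    · intro H h1
      apply H
      rintro ⟨x, rfl⟩
      fin_cases x
      exact h1 (by simp [wi])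
  exact if_congr hc rfl rfl

theorem wi_comp (v w k i j : ℕ) (h : i + w ≤ k) (h' : j + v ≤ w) :
    wi w k i h ∘ wi v w j h' = wi v k (i + j) (by omega) := by
  funext x; ext; simp [wi, add_assoc]

/-- embedding of window of width `w` at `i` maps `embR w R j` to `embR k R (i+j)` -/
theorem wh_embR (w i j : ℕ) (h : i + w ≤ k) (h' : j + 2 ≤ w) (R : RMat N) :
    wh (A := ℂ) (wi w k i h) (wi_inj w k i h) (embR w R j) = embR k R (i + j) := by
  change wm _ _ = _
  rw [embR_eq R j h', wm_comp (wi_inj w k i h), wi_comp, ← embR_eq]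

theorem wh_lift_embR [Algebra ℂ A] (w i j : ℕ) (h : i + w ≤ k) (h' : j + 2 ≤ w) (R : RMat N) :
    wh (A := A) (wi w k i h) (wi_inj w k i h) (liftC A (embR w R j))
      = liftC A (embR k R (i + j)) := by
  rw [← wh_embR w i j h h']
  change wm _ _ = liftC A (wm _ _)
  rw [wm_lift]

theorem wh_emb1 (w : ℕ) (h : 0 + w ≤ k) (h' : 0 + 1 ≤ w) (X : Matrix (Fin N) (Fin N) A) :
    wh (A := A) (wi w k 0 h) (wi_inj w k 0 h) (emb1 w X) = emb1 k X := by
  change wm _ _ = _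
  rw [emb1_eq X h', wm_comp (wi_inj w k 0 h), wi_comp, ← emb1_eq]

theorem embR_inv {R S : RMat N} (h : R * S = 1) (i : ℕ) (hi : i + 1 < k) :
    embR k R i * embR k S i = 1 := by
  rw [embR_eq R i hi, embR_eq S i hi, ← wm_mul (wi_inj _ _ _ _), ← R2_mul, h, R2_one, wm_one]

theorem bdC {R Rinv : RMat N} (h1 : R * Rinv = 1) (h2 : Rinv * R = 1) (hbr : IsBraiding R) :
    BD k (embR k R) (embR k Rinv) where
  inv := embR_inv h1
  inv' := embR_inv h2
  br i hi := by
    have := congrArg (wh (A := ℂ) (wi 3 k i hi) (wi_inj _ _ _ _)) hbr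
    simp only [map_mul] at this
    rw [wh_embR 3 i 0 hi (by omega), wh_embR 3 i 1 hi (by omega)] at this
    exact this
  far i j hij hj := by
    rw [embR_eq R i (by omega), embR_eq R j hj]
    apply wm_commute (wi_inj _ _ _ _) (wi_inj _ _ _ _)
    · intro a b hab
      simp only [wi, Fin.mk.injEq] at hab
      omega
    · intros; exact Commute.all _ _

theorem bdA [Algebra ℂ A] {R Rinv : RMat N} (h1 : R * Rinv = 1) (h2 : Rinv * R = 1)
    (hbr : IsBraiding R) :
    BD k (fun i => liftC A (embR k R i)) (fun i => liftC A (embR k Rinv i)) where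
  inv i hi := by
    rw [← liftC_mul, (bdC h1 h2 hbr).inv i hi]; exact map_one (algebraMap ℂ A).mapMatrix
  inv' i hi := by
    rw [← liftC_mul, (bdC h1 h2 hbr).inv' i hi]; exact map_one (algebraMap ℂ A).mapMatrix
  br i hi := by
    simp only [← liftC_mul, (bdC h1 h2 hbr).br i hi]
  far i j hij hj := by
    unfold Commute SemiconjBy
    simp only [← liftC_mul, ((bdC h1 h2 hbr).far i j hij hj).eq]

theorem emb1_comm [Algebra ℂ A] (R : RMat N) (X : Matrix (Fin N) (Fin N) A) (i : ℕ) (h0 : 0 < i)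
    (hi : i + 1 < k) : Commute (liftC A (embR k R i)) (emb1 k X) := by
  rw [embR_eq R i hi, emb1_eq X (by omega), wm_lift]
  apply wm_commute (wi_inj _ _ _ _) (wi_inj _ _ _ _)
  · intro a b hab
    simp only [wi, Fin.mk.injEq] at hab
    omega
  · intro a b c d
    exact Algebra.commutes _ _

theorem emb1_mul (X Y : Matrix (Fin N) (Fin N) A) : emb1 k (X * Y) = emb1 k X * emb1 k Y := by
  by_cases hk : 0 < k
  · rw [emb1_eq _ (by omega : 0 + 1 ≤ k), emb1_eq _ (by omega : 0 + 1 ≤ k),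
      emb1_eq _ (by omega : 0 + 1 ≤ k), X1_mul, wm_mul (wi_inj _ _ _ _)]
  · have : ∀ Z : Matrix (Fin N) (Fin N) A, emb1 k Z = 1 := by
      intro Z; ext f g; unfold emb1; rw [dif_neg hk]
    simp only [this, mul_one]

theorem Ct_R2 {R Rinv Ψ : RMat N} (hΨ : SkewInv R Ψ) (h1 : R * Rinv = 1) (h2 : Rinv * R = 1)
    (hbr : IsBraiding R) : Commute (Ct 2 (Cmat Ψ)) (R2 R) := by
  have b := bdC (k := 3) h1 h2 hbr
  have br := b.br 0 (by omega)
  have i0 := b.inv 0 (by omega)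
  have i1 := b.inv 1 (by omega)
  have j0 := b.inv' 0 (by omega)
  have j1 := b.inv' 1 (by omega)
  simp only [zero_add] at br
  have y1 : embR 3 R 0 * embR 3 R 1 * embR 3 Rinv 0 = embR 3 Rinv 1 * embR 3 R 0 * embR 3 R 1 := by
    calc _ = embR 3 Rinv 1 * (embR 3 R 1 * embR 3 R 0 * embR 3 R 1) * embR 3 Rinv 0 := by
          simp only [← mul_assoc, j1, one_mul]
      _ = _ := by rw [← br]; simp only [mul_assoc, i0, mul_one]
  have y2 : embR 3 Rinv 0 * embR 3 R 1 * embR 3 R 0 = embR 3 R 1 * embR 3 R 0 * embR 3 Rinv 1 := by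
    calc _ = embR 3 Rinv 0 * (embR 3 R 1 * embR 3 R 0 * embR 3 R 1) * embR 3 Rinv 1 := by
          simp only [mul_assoc, i1, mul_one]
      _ = _ := by rw [← br]; simp only [← mul_assoc, j0, one_mul]
  have key := C_comm_aux hΨ h1 h2
    (fun a b u x f v => by rw [← prod010, y1, prod101])
    (fun a b u x f v => by rw [← prod010, y2, prod101])
  have hc : Commute (Ct 2 (Cmat Ψ)) (R2 Rinv) := by
    ext f g
    rw [Matrix.mul_apply, Matrix.mul_apply, ← (finTwoArrowEquiv (Fin N)).symm.sum_comp,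
      ← (finTwoArrowEquiv (Fin N)).symm.sum_comp, Fintype.sum_prod_type, Fintype.sum_prod_type]
    have := key (f 0) (f 1) (g 0) (g 1)
    simpa [Ct, R2, Fin.prod_univ_two] using this
  exact comm_inv hc (by rw [← R2_mul, h2, R2_one]) (by rw [← R2_mul, h1, R2_one])

theorem Ct_embR {R Rinv Ψ : RMat N} (hΨ : SkewInv R Ψ) (h1 : R * Rinv = 1) (h2 : Rinv * R = 1)
    (hbr : IsBraiding R) (i : ℕ) (hi : i + 1 < k) : Commute (Ct k (Cmat Ψ)) (embR k R i) := by
  rw [embR_eq R i hi]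
  exact Ct_wm (wi_inj _ _ _ _) _ _ (Ct_R2 hΨ h1 h2 hbr)

theorem hecke_embR {R : RMat N} {q : ℂ} (hH : HeckeCond R q) (i : ℕ) (hi : i + 1 < k) :
    (q • 1 - embR k R i) * (q⁻¹ • 1 + embR k R i) = 0 := by
  have e : R2 ((q • (1 : RMat N) - R) * (q⁻¹ • (1 : RMat N) + R)) = 0 := by
    rw [hH]; rfl
  have s1 : R2 (q • (1 : RMat N) - R) = q • 1 - R2 R := by
    rw [← R2_one]; rfl
  have s2 : R2 (q⁻¹ • (1 : RMat N) + R) = q⁻¹ • 1 + R2 R := by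
    rw [← R2_one]; rfl
  rw [R2_mul, s1, s2] at e
  have e' := congrArg (wh (A := ℂ) (wi 2 k i hi) (wi_inj _ _ _ _)) e
  rw [map_mul, map_sub, map_add, map_zero] at e'
  change (wm _ _ - wm _ _) * (wm _ _ + wm _ _) = 0 at e'
  rw [wm_smul, wm_smul, wm_one, ← embR_eq] at e'
  exact e'

theorem Asym_eq (R : RMat N) (q : ℂ) (j : ℕ) : Asym k R q j = asy (embR k R) q (qNum q) j := by
  induction j with
  | zero => rfl
  | succ j ih =>
    cases j with
    | zero => rfl
    | succ j => simp only [Asym, asy, ih]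

variable [Algebra ℂ A]

theorem copyX_eq (R Rinv : RMat N) (X : Matrix (Fin N) (Fin N) A) (j : ℕ) :
    copyX k R Rinv X j
      = cp (fun i => liftC A (embR k R i)) (fun i => liftC A (embR k Rinv i)) (emb1 k X) j := by
  induction j with
  | zero => rfl
  | succ j ih => simp only [copyX, cp, ih]

theorem upChain_eq (R Rinv : RMat N) (X : Matrix (Fin N) (Fin N) A) (n : ℕ) :
    upChain k R Rinv X n
      = up (fun i => liftC A (embR k R i)) (fun i => liftC A (embR k Rinv i)) (emb1 k X) n := by
  induction n with
  | zero => rfl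
  | succ n ih =>
    rw [up, ← ih, ← copyX_eq]
    simp [upChain, List.range_succ]

theorem downChain_eq (R Rinv : RMat N) (X : Matrix (Fin N) (Fin N) A) (n : ℕ) :
    downChain k R Rinv X n
      = dn (fun i => liftC A (embR k R i)) (fun i => liftC A (embR k Rinv i)) (emb1 k X) n := by
  induction n with
  | zero => rfl
  | succ n ih =>
    rw [dn, ← ih, ← copyX_eq]
    simp [downChain, List.range_succ]

theorem capChainA_eq (R Rinv : RMat N) (q : ℂ) (X : Matrix (Fin N) (Fin N) A) (n : ℕ) :
    capChainA k R Rinv q X n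
      = capc (fun i => liftC A (embR k R i)) (fun i => liftC A (embR k Rinv i)) (emb1 k X)
        (fun i => q ^ i * ((q ^ i - q⁻¹ ^ i) / (q - q⁻¹))) n := by
  induction n with
  | zero => rfl
  | succ n ih =>
    rw [capc, ← ih, ← copyX_eq]
    simp [capChainA, List.range_succ, qNum]

end
end Cap6

/-- quantum Capelli identity:  for a skew-invertible Hecke symmetry
of rank `m`,
`⟨A^(m) L_{1̄}(L_{2̄}+qI)⋯(L_{m̄}+q^{m−1}(m−1)_q I)⟩_{1…m}
  = q^{−m} · det_R M · det_{R⁻¹} D`, where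
`det_R M = q^{m²}⟨A^(m) M_{1̄}⋯M_{m̄}⟩_{1…m}` and
`det_{R⁻¹} D = q^{m²}⟨A^(m) D_{m̄}⋯D_{1̄}⟩_{1…m}`, with `L = MD`. -/
theorem statement6 {N : ℕ} (R Rinv Ψ : RMat N) (q : ℂ) (m : ℕ)
    (hq0 : q ≠ 0) (hq1 : q ≠ 1) (hqm1 : q ≠ -1)
    (hinv : R * Rinv = 1) (hinv' : Rinv * R = 1)
    (hbr : IsBraiding R) (hH : HeckeCond R q) (hΨ : SkewInv R Ψ)
    (hqm : ∀ j : ℕ, 2 ≤ j → j ≤ m → qNum q j ≠ 0)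
    (hrank : (Asym m R q m).rank = 1)
    (hA0 : Asym (m + 1) R q (m + 1) = 0)
    (htr : rTr (Cmat Ψ) (Asym m R q m) = q⁻¹ ^ (m ^ 2))
    {A : Type _} [Ring A] [Algebra ℂ A]
    (M D : Matrix (Fin N) (Fin N) A)
    (hRE : RERel R M) (hDD : DDRel Rinv D) (hperm : PermRel R Rinv M D) :
    rTr (Cmat Ψ) (liftC A (Asym m R q m) * capChainA m R Rinv q (M * D) m)
      = (q⁻¹ ^ m) •
          (((q ^ (m ^ 2)) • rTr (Cmat Ψ) (liftC A (Asym m R q m) * upChain m R Rinv M m)) *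
           ((q ^ (m ^ 2)) • rTr (Cmat Ψ) (liftC A (Asym m R q m) * downChain m R Rinv D m))) := by
  have hq2 : q - q⁻¹ ≠ 0 := by
    intro h
    have h2 : q * q = 1 := by
      have : q = q⁻¹ := sub_eq_zero.mp h
      nth_rewrite 2 [this]
      exact mul_inv_cancel₀ hq0
    rcases mul_self_eq_one_iff.mp h2 with h | h
    · exact hq1 h
    · exact hqm1 h
  have bC := Cap6.bdC (k := m) hinv hinv' hbr
  have bA := Cap6.bdA (k := m) (A := A) hinv hinv' hbr
  have hM : ∀ i, 0 < i → i + 1 < m → Commute (liftC A (embR m R i)) (emb1 m M) :=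
    fun i h0 hi => Cap6.emb1_comm R M i h0 hi
  have hD : ∀ i, 0 < i → i + 1 < m → Commute (liftC A (embR m R i)) (emb1 m D) :=
    fun i h0 hi => Cap6.emb1_comm R D i h0 hi
  have hRE' : 1 < m → liftC A (embR m R 0) * emb1 m M * liftC A (embR m R 0) * emb1 m M
      = emb1 m M * liftC A (embR m R 0) * emb1 m M * liftC A (embR m R 0) := by
    intro hm
    have := congrArg (Cap6.wh (A := A) (Cap6.wi 2 m 0 (by omega)) (Cap6.wi_inj _ _ _ _)) hRE
    simpa only [map_mul, Cap6.wh_lift_embR 2 0 0 (by omega : 0 + 2 ≤ m) (by omega),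
      Cap6.wh_emb1 2 (by omega : 0 + 2 ≤ m) (by omega)] using this
  have hDD' : 1 < m → liftC A (embR m Rinv 0) * emb1 m D * liftC A (embR m Rinv 0) * emb1 m D
      = emb1 m D * liftC A (embR m Rinv 0) * emb1 m D * liftC A (embR m Rinv 0) := by
    intro hm
    have := congrArg (Cap6.wh (A := A) (Cap6.wi 2 m 0 (by omega)) (Cap6.wi_inj _ _ _ _)) hDD
    simpa only [map_mul, Cap6.wh_lift_embR 2 0 0 (by omega : 0 + 2 ≤ m) (by omega),
      Cap6.wh_emb1 2 (by omega : 0 + 2 ≤ m) (by omega)] using this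
  have hP' : 1 < m → emb1 m D * liftC A (embR m R 0) * emb1 m M
      = liftC A (embR m R 0) * emb1 m M * liftC A (embR m Rinv 0) * emb1 m D *
        liftC A (embR m Rinv 0) + 1 := by
    intro hm
    have := congrArg (Cap6.wh (A := A) (Cap6.wi 2 m 0 (by omega)) (Cap6.wi_inj _ _ _ _)) hperm
    simpa only [map_mul, map_add, map_one,
      Cap6.wh_lift_embR 2 0 0 (by omega : 0 + 2 ≤ m) (by omega),
      Cap6.wh_emb1 2 (by omega : 0 + 2 ≤ m) (by omega)] using this
  have hA := Cap6.asy_main (m := m) (q := q) hq0 (qNum q)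
    (by simp only [qNum, pow_one]; exact div_self hq2)
    (by
      intro j
      have h3 : q ^ 2 - 1 ≠ 0 := by
        intro h; apply hq2; field_simp; rw [h, mul_zero]
      simp only [qNum, inv_pow]
      field_simp
      ring)
    hqm bC (fun i hi => Cap6.hecke_embR hH i hi) m le_rfl
  rw [← Cap6.Asym_eq] at hA
  obtain ⟨hAA, -, -, -, hAr⟩ := hA
  have hCA : Commute (Cap6.Ct m (Cmat Ψ)) (Asym m R q m) := by
    rw [Cap6.Asym_eq]
    exact (Cap6.asy_comm _ _ _ fun i hi =>
      (Cap6.Ct_embR hΨ hinv hinv' hbr i hi).symm).symm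
  have hcyc : ∀ Z : TMat N m A, rTr (Cmat Ψ) (liftC A (Asym m R q m) * Z)
      = rTr (Cmat Ψ) (liftC A (Asym m R q m) * Z * liftC A (Asym m R q m)) := by
    intro Z
    rw [mul_assoc, Cap6.rTr_cyc _ _ hCA (Z * _), mul_assoc, ← Cap6.liftC_mul, hAA,
      Cap6.rTr_cyc _ _ hCA]
  set S := liftC A (Asym m R q m) with hS
  have hSS : S * S = S := by rw [hS, ← Cap6.liftC_mul, hAA]
  have hrS : ∀ i, i + 1 < m → liftC A (embR m R i) * S = (-q⁻¹) • S := by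
    intro i hi
    rw [hS, ← Cap6.liftC_mul, (hAr i hi).1, Cap6.liftC_smul]
  have hup : Commute S (upChain m R Rinv M m) := by
    have hc : ∀ i, i + 1 < m → Commute (liftC A (embR m R i)) (upChain m R Rinv M m) := by
      intro i hi
      obtain ⟨n, hn⟩ := Nat.exists_eq_add_of_le (show i + 2 ≤ m from hi)
      have := Cap6.up_comm bA hM hRE' i n (by omega)
      rw [← hn, ← Cap6.upChain_eq] at this
      exact this
    have hl : ∀ j, liftC A (Asym m R q j)
        = Cap6.asy (fun i => liftC A (embR m R i)) q (qNum q) j := by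
      intro j
      induction j with
      | zero => exact map_one (algebraMap ℂ A).mapMatrix
      | succ j ih =>
        cases j with
        | zero => exact map_one (algebraMap ℂ A).mapMatrix
        | succ j =>
          have hsm : ∀ (c : ℂ) (X : TMat N m ℂ), liftC A (c • X) = c • liftC A X :=
            fun c X => Cap6.liftC_smul c X
          have hsub : ∀ (X Y : TMat N m ℂ), liftC A (X - Y) = liftC A X - liftC A Y :=
            fun X Y => map_sub (algebraMap ℂ A).mapMatrix X Y
          have h1 : liftC A (1 : TMat N m ℂ) = 1 := map_one (algebraMap ℂ A).mapMatrix
          simp only [Asym, Cap6.asy, hsm, Cap6.liftC_mul, hsub, h1, ih]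
    rw [hS, hl]
    exact Cap6.asy_comm _ _ _ hc
  have hcap := Cap6.capelli_abs hq0 hq2 bA hM hD hP' hDD' m le_rfl S hrS
  rw [← Cap6.emb1_mul, ← Cap6.capChainA_eq, ← Cap6.upChain_eq, ← Cap6.downChain_eq] at hcap
  obtain ⟨x, hx⟩ := Cap6.rank_one_sandwich (A := A) _ hrank (upChain m R Rinv M m)
  obtain ⟨y, hy⟩ := Cap6.rank_one_sandwich (A := A) _ hrank (downChain m R Rinv D m)
  rw [← hS] at hx hy
  have htS : rTr (Cmat Ψ) S = algebraMap ℂ A (q⁻¹ ^ (m ^ 2)) := by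
    rw [hS, Cap6.rTr_lift, htr]
  have hqq : q ^ (m ^ 2) * q⁻¹ ^ (m ^ 2) = 1 := by
    rw [← mul_pow, mul_inv_cancel₀ hq0, one_pow]
  have hdet : ∀ z : A, (q ^ (m ^ 2)) • (z * algebraMap ℂ A (q⁻¹ ^ (m ^ 2))) = z := by
    intro z
    rw [← Algebra.commutes, ← Algebra.smul_def, smul_smul, hqq, one_smul]
  rw [hcyc (upChain m R Rinv M m), hx, Cap6.rTr_left, htS, hdet,
    hcyc (downChain m R Rinv D m), hy, Cap6.rTr_left, htS, hdet,
    hcyc, mul_assoc, hcap, mul_smul_comm, Cap6.rTr_smul]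
  have hfin : S * (upChain m R Rinv M m * (downChain m R Rinv D m * S)) = x • (y • S) := by
    calc _ = S * upChain m R Rinv M m * S * (downChain m R Rinv D m * S) := by
          rw [mul_assoc S _ S, ← hup.eq, ← mul_assoc S S, hSS, mul_assoc]
      _ = x • (S * downChain m R Rinv D m * S) := by
          rw [hx, smul_mul_assoc, mul_assoc]
      _ = _ := by rw [hy]
  rw [hfin, Cap6.rTr_left, Cap6.rTr_left, htS, ← mul_assoc, ← Algebra.commutes,
    ← Algebra.smul_def, smul_smul]
  congr 1
  have : m ^ 2 = m * (m - 1) + m := by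
    cases m with
    | zero => rfl
    | succ n => simp only [Nat.add_sub_cancel]; ring
  rw [this, pow_add, ← mul_assoc, ← mul_pow, mul_inv_cancel₀ hq0, one_pow, one_mul]
end
end

section
/- Let R be a Hecke symmetry with parameter q, let M and D be N×N matrices with entries in a unital associative ℂ-algebra 𝒜 satisfying the Reflection Equation R M₁ R M₁ = M₁ R M₁ R, the relation R⁻¹ D₁ R⁻¹ D₁ = D₁ R⁻¹ D₁ R⁻¹, and the permutation relations D₁ R M₁ = R M₁ R⁻¹ D₁ R⁻¹ + I, and set L := M D. Then for all integers k ≥ 2 and 1 ≤ p ≤ k−1, as an identity of N^k×N^k matrices over 𝒜: D_{p̄} L_{k̄} = L_{k̄} D_{p̄} R_{k−1→p+1} R_p⁻² R⁻¹_{p+1→k−1} + D_{p̄} R_{k−1→p+1} R_p⁻¹ R⁻¹_{p+1→k−1}, where R_{a→b} := R_a R_{a−1} ⋯ R_b for a ≥ b and R⁻¹_{b→a} := R_b⁻¹ R_{b+1}⁻¹ ⋯ R_a⁻¹ for b ≤ a (each chain being the identity matrix when its index range is empty). -/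
open Matrix BigOperators

noncomputable section

section Abstract

variable {B : Type*} [Ring B]

/-- iterated conjugation -/
def Kc (r s : ℕ → B) (a : ℕ) : ℕ → B → B
  | 0, x => x
  | m + 1, x => r (a + m) * Kc r s a m x * s (a + m)

theorem Kc_succ' (r s : ℕ → B) (a m : ℕ) (x : B) :
    Kc r s a (m + 1) x = Kc r s (a + 1) m (r a * x * s a) := by
  induction m with
  | zero => simp [Kc]
  | succ m ih =>
    rw [Kc, ih, Kc]
    have : a + (m + 1) = a + 1 + m := by omega
    rw [this]

theorem Kc_mul_left (r s : ℕ → B) (a m : ℕ) (x y : B)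
    (h : ∀ j, a ≤ j → Commute y (r j)) :
    Kc r s a m (y * x) = y * Kc r s a m x := by
  induction m with
  | zero => simp [Kc]
  | succ m ih =>
    rw [Kc, ih, Kc]
    have := (h (a + m) (by omega)).eq
    simp only [← mul_assoc]
    rw [this]

theorem Kc_mul_right (r s : ℕ → B) (a m : ℕ) (x y : B)
    (h : ∀ j, a ≤ j → Commute y (s j)) :
    Kc r s a m (x * y) = Kc r s a m x * y := by
  induction m with
  | zero => simp [Kc]
  | succ m ih =>
    rw [Kc, ih, Kc]
    have := (h (a + m) (by omega)).eq
    simp only [mul_assoc]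
    rw [this]

theorem comm_inv {a b y : B} (h1 : a * b = 1) (h2 : b * a = 1) (h : Commute y a) :
    Commute y b := by
  have h' : y * a = a * y := h
  calc y * b = (b * a) * (y * b) := by rw [h2, one_mul]
    _ = b * (a * y) * b := by simp only [mul_assoc]
    _ = b * (y * a) * b := by rw [h']
    _ = b * y * (a * b) := by simp only [mul_assoc]
    _ = b * y := by rw [h1, mul_one]

theorem comm_above (r s X : ℕ → B) (hrs : ∀ i, r i * s i = 1) (hsr : ∀ i, s i * r i = 1)
    (hfar : ∀ i j, i + 1 < j → Commute (r i) (r j))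
    (hX : ∀ i, X (i + 1) = r i * X i * s i) (hX0 : ∀ j, 1 ≤ j → Commute (X 0) (r j)) :
    ∀ i j, i < j → Commute (X i) (r j) := by
  intro i
  induction i with
  | zero => intro j hj; exact hX0 j hj
  | succ i ih =>
    intro j hj
    rw [hX]
    have h1 := hfar i j hj
    have h2 : Commute (s i) (r j) := (comm_inv (hrs i) (hsr i) h1.symm).symm
    exact (h1.mul_left (ih j (by omega))).mul_left h2

theorem comm_below (k : ℕ) (r s X : ℕ → B) (hrs : ∀ i, r i * s i = 1)
    (hsr : ∀ i, s i * r i = 1)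
    (hfar : ∀ i j, i + 1 < j → Commute (r i) (r j))
    (hbr : ∀ i, i + 2 < k → r i * r (i + 1) * r i = r (i + 1) * r i * r (i + 1))
    (hX : ∀ i, X (i + 1) = r i * X i * s i) (hX0 : ∀ j, 1 ≤ j → Commute (X 0) (r j)) :
    ∀ i j, j + 1 < i → i < k → Commute (X i) (r j) := by
  intro i
  induction i with
  | zero => intro j hj; omega
  | succ i ih =>
    intro j hj hk
    rcases Nat.lt_or_ge (j + 1) i with h | h
    · rw [hX]
      have h1 := (hfar j i h).symm
      have h2 : Commute (s i) (r j) := (comm_inv (hrs i) (hsr i) h1.symm).symm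
      exact (h1.mul_left (ih j h (by omega))).mul_left h2
    · obtain rfl : i = j + 1 := by omega
      have hb := hbr j hk
      have hc : X j * r (j + 1) = r (j + 1) * X j :=
        comm_above r s X hrs hsr hfar hX hX0 j (j + 1) (by omega)
      rw [hX, hX]
      -- inverse relation
      have hb2 : s j * s (j + 1) * r j = r (j + 1) * s j * s (j + 1) := by
        calc s j * s (j + 1) * r j
            = s j * s (j + 1) * (r j * r (j+1) * r j) * s j * s (j+1) := by
              simp only [mul_assoc]
              rw [← mul_assoc (r j) (s j), hrs, one_mul, hrs, mul_one]
          _ = s j * s (j + 1) * (r (j+1) * r j * r (j+1)) * s j * s (j+1) := by rw [hb]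
          _ = s j * (s (j + 1) * r (j+1)) * r j * r (j+1) * s j * s (j+1) := by
              simp only [mul_assoc]
          _ = r (j + 1) * s j * s (j + 1) := by
              rw [hsr, mul_one, hsr, one_mul]
      show _ * _ = _ * _
      calc r (j + 1) * (r j * X j * s j) * s (j + 1) * r j
          = r (j + 1) * r j * X j * (s j * s (j + 1) * r j) := by simp only [mul_assoc]
        _ = r (j + 1) * r j * (X j * r (j + 1)) * s j * s (j + 1) := by
              rw [hb2]; simp only [mul_assoc]
        _ = (r (j + 1) * r j * r (j + 1)) * X j * s j * s (j + 1) := by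
              rw [hc]; simp only [mul_assoc]
        _ = _ := by rw [← hb]; simp only [mul_assoc]

theorem abs_main (k : ℕ) (r s D L : ℕ → B) (m : B) (hrs : ∀ i, r i * s i = 1)
    (hsr : ∀ i, s i * r i = 1)
    (hfar : ∀ i j, i + 1 < j → Commute (r i) (r j))
    (hbr : ∀ i, i + 2 < k → r i * r (i + 1) * r i = r (i + 1) * r i * r (i + 1))
    (hD : ∀ i, D (i + 1) = r i * D i * s i) (hD0 : ∀ j, 1 ≤ j → Commute (D 0) (r j))
    (hL : ∀ i, L (i + 1) = r i * L i * s i) (hL0 : ∀ j, 1 ≤ j → Commute (L 0) (r j))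
    (hLm : L 0 = m * D 0)
    (hDD : s 0 * D 0 * s 0 * D 0 = D 0 * s 0 * D 0 * s 0)
    (hP : D 0 * r 0 * m = r 0 * m * s 0 * D 0 * s 0 + 1) :
    ∀ p n, p + 1 + n < k → D p * L (p + 1 + n) =
      L (p + 1 + n) * D p * Kc r s (p + 1) n (s p * s p) + D p * Kc r s (p + 1) n (s p) := by
  intro p
  induction p with
  | zero =>
    intro n
    induction n with
    | zero =>
      intro _
      simp only [Kc, Nat.add_zero]
      rw [hL, hLm]
      calc D 0 * (r 0 * (m * D 0) * s 0) = (D 0 * r 0 * m) * (D 0 * s 0) := by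
            simp only [mul_assoc]
        _ = r 0 * m * (s 0 * D 0 * s 0 * D 0) * s 0 + D 0 * s 0 := by
            rw [hP, add_mul, one_mul]; simp only [mul_assoc]
        _ = _ := by rw [hDD]; simp only [mul_assoc]
    | succ n ih =>
      intro hk
      have ih := ih (by omega)
      have e : 0 + 1 + (n + 1) = (0 + 1 + n) + 1 := by omega
      rw [e, hL]
      simp only [Kc]
      generalize hj : 0 + 1 + n = j at *
      have hc : D 0 * r j = r j * D 0 := hD0 j (by omega)
      have hss := hsr j
      calc D 0 * (r j * L j * s j) = (D 0 * r j) * L j * s j := by simp only [mul_assoc]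
        _ = r j * (D 0 * L j) * s j := by rw [hc]; simp only [mul_assoc]
        _ = r j * L j * 1 * D 0 * Kc r s (0 + 1) n (s 0 * s 0) * s j
            + (r j * D 0) * Kc r s (0 + 1) n (s 0) * s j := by
            rw [ih]; simp only [mul_add, add_mul, mul_assoc, one_mul]
        _ = r j * L j * s j * (r j * D 0) * Kc r s (0 + 1) n (s 0 * s 0) * s j
            + (r j * D 0) * Kc r s (0 + 1) n (s 0) * s j := by
            rw [← hss]; simp only [mul_assoc]
        _ = _ := by rw [← hc]; simp only [mul_assoc]
  | succ p ih =>
    intro n hk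
    have e : p + 1 + 1 + n = p + 1 + (n + 1) := by omega
    have ih := ih (n + 1) (by omega)
    rw [← e] at ih
    have hc : L (p + 1 + 1 + n) * r p = r p * L (p + 1 + 1 + n) :=
      comm_below k r s L hrs hsr hfar hbr hL hL0 _ _ (by omega) hk
    have hc' : L (p + 1 + 1 + n) * s p = s p * L (p + 1 + 1 + n) :=
      comm_inv (hrs p) (hsr p)
        (comm_below k r s L hrs hsr hfar hbr hL hL0 _ _ (by omega) hk)
    generalize L (p + 1 + 1 + n) = l at *
    have key : ∀ x y, r p * (r (p + 1) * x * s (p + 1)) * s p = y →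
        r p * Kc r s (p + 1) (n + 1) x * s p = Kc r s (p + 1 + 1) n y := by
      intro x y hxy
      have c1 : ∀ j, p + 1 + 1 ≤ j → Commute (r p) (r j) := fun j hj => hfar p j (by omega)
      have c2 : ∀ j, p + 1 + 1 ≤ j → Commute (s p) (s j) := fun j hj =>
        comm_inv (hrs j) (hsr j) (comm_inv (hrs p) (hsr p) (c1 j hj).symm).symm
      rw [Kc_succ', ← hxy, Kc_mul_right _ _ _ _ _ _ c2, Kc_mul_left _ _ _ _ _ _ c1]
    have hb := hbr p (by omega)
    have b1 : r p * r (p + 1) * s p = s (p + 1) * r p * r (p + 1) := by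
      calc r p * r (p + 1) * s p
          = (s (p+1) * r (p + 1)) * r p * r (p + 1) * s p := by rw [hsr, one_mul]
        _ = s (p+1) * (r (p + 1) * r p * r (p + 1)) * s p := by simp only [mul_assoc]
        _ = s (p+1) * r p * r (p + 1) * (r p * s p) := by rw [← hb]; simp only [mul_assoc]
        _ = _ := by rw [hrs, mul_one]
    have b3 : r p * r (p + 1) * s (p + 1) * s p = 1 := by
      rw [mul_assoc (r p), hrs, mul_one, hrs]
    have k1 := key (s p) (s (p + 1)) (by
      calc r p * (r (p + 1) * s p * s (p + 1)) * s p
          = (r p * r (p + 1) * s p) * s (p + 1) * s p := by simp only [mul_assoc]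
        _ = s (p + 1) * (r p * r (p + 1) * s (p + 1) * s p) := by
            rw [b1]; simp only [mul_assoc]
        _ = _ := by rw [b3, mul_one])
    have k2 := key (s p * s p) (s (p + 1) * s (p + 1)) (by
      calc r p * (r (p + 1) * (s p * s p) * s (p + 1)) * s p
          = (r p * r (p + 1) * s p) * s p * s (p + 1) * s p := by simp only [mul_assoc]
        _ = s (p + 1) * r p * r (p + 1) * s p * s (p + 1) * s p := by
            rw [b1]
        _ = s (p + 1) * (r p * r (p + 1) * s p) * s (p + 1) * s p := by
            simp only [mul_assoc]
        _ = s (p + 1) * s (p + 1) * (r p * r (p + 1) * s (p + 1) * s p) := by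
            rw [b1]; simp only [mul_assoc]
        _ = _ := by rw [b3, mul_one])
    rw [← k1, ← k2, hD]
    have hs := hsr p
    calc r p * D p * s p * l = r p * D p * (s p * l) := by simp only [mul_assoc]
      _ = r p * (D p * l) * s p := by rw [← hc']; simp only [mul_assoc]
      _ = (r p * l) * D p * 1 * Kc r s (p + 1) (n + 1) (s p * s p) * s p
          + r p * D p * 1 * Kc r s (p + 1) (n + 1) (s p) * s p := by
          rw [ih]; simp only [mul_add, add_mul, mul_assoc, one_mul]
      _ = _ := by rw [← hc, ← hs]; simp only [mul_assoc]

end Abstract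

section Emb

variable {N : ℕ} {A : Type*} [Ring A]

/-- splitting of multi-indices -/
def splitEquiv (N : ℕ) {m k : ℕ} (σ : Fin m → Fin k) (hσ : Function.Injective σ) :
    (Fin k → Fin N) ≃ (Fin m → Fin N) × ({j : Fin k // j ∉ Set.range σ} → Fin N) :=
  Equiv.ofBijective (fun f => (f ∘ σ, fun j => f j.1)) (by
    classical
    constructor
    · intro f g h
      simp only [Prod.mk.injEq] at h
      funext j
      by_cases hj : j ∈ Set.range σ
      · obtain ⟨i, rfl⟩ := hj
        exact congrFun h.1 i
      · exact congrFun h.2 ⟨j, hj⟩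
    · rintro ⟨u, v⟩
      refine ⟨fun j => if hj : j ∈ Set.range σ then u hj.choose else v ⟨j, hj⟩, ?_⟩
      ext1
      · funext i
        have hj : σ i ∈ Set.range σ := ⟨i, rfl⟩
        simp only [Function.comp, dif_pos hj]
        exact congrArg u (hσ hj.choose_spec)
      · funext j
        simp only [dif_neg j.2])

open Classical in
/-- general embedding as a ring homomorphism -/
def EE {m k : ℕ} (σ : Fin m → Fin k) (hσ : Function.Injective σ) :
    TMat N m A →+* TMat N k A where
  toFun X := (blockDiagonal (fun _ => X)).submatrix (splitEquiv N σ hσ) (splitEquiv N σ hσ)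
  map_one' := by
    have := blockDiagonal_one (m := Fin m → Fin N)
      (o := {j : Fin k // j ∉ Set.range σ} → Fin N) (α := A)
    change blockDiagonal (fun _ => (1 : TMat N m A)) = _ at this
    rw [this, submatrix_one_equiv]
  map_mul' X Y := by
    have := blockDiagonal_mul (o := {j : Fin k // j ∉ Set.range σ} → Fin N)
      (fun _ => X) (fun _ => Y)
    rw [this, submatrix_mul_equiv]
  map_zero' := by
    have := blockDiagonal_zero (m := Fin m → Fin N) (n := Fin m → Fin N)
      (o := {j : Fin k // j ∉ Set.range σ} → Fin N) (α := A)
    change blockDiagonal (fun _ => (0 : TMat N m A)) = _ at this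
    rw [this]; rfl
  map_add' X Y := by
    have := blockDiagonal_add (o := {j : Fin k // j ∉ Set.range σ} → Fin N)
      (fun _ => X) (fun _ => Y)
    change blockDiagonal (fun _ => X + Y) = _ at this
    rw [this]; rfl

open Classical in
theorem EE_apply {m k : ℕ} (σ : Fin m → Fin k) (hσ : Function.Injective σ)
    (X : TMat N m A) (f g : Fin k → Fin N) :
    EE σ hσ X f g = if ∀ j, j ∉ Set.range σ → f j = g j then X (f ∘ σ) (g ∘ σ) else 0 := by
  have : ((splitEquiv N σ hσ f).2 = (splitEquiv N σ hσ g).2) ↔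
      ∀ j, j ∉ Set.range σ → f j = g j := by
    constructor
    · intro h j hj; exact congrFun h ⟨j, hj⟩
    · intro h; funext j; exact h j.1 j.2
  change blockDiagonal (fun _ => X) (splitEquiv N σ hσ f) (splitEquiv N σ hσ g) = _
  rw [blockDiagonal_apply]
  simp only [this]
  rfl

theorem EE_liftC [Algebra ℂ A] {m k : ℕ} (σ : Fin m → Fin k) (hσ : Function.Injective σ)
    (X : TMat N m ℂ) : EE σ hσ (liftC A X) = liftC A (EE σ hσ X) := by
  classical
  ext f g
  simp only [liftC, Matrix.map_apply, EE_apply]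
  split_ifs <;> simp

open Classical in
theorem EE_mul_disj {m l k : ℕ} (σ : Fin m → Fin k) (hσ : Function.Injective σ)
    (τ : Fin l → Fin k) (hτ : Function.Injective τ) (hd : ∀ i j, σ i ≠ τ j)
    (X : TMat N m A) (Y : TMat N l A) (f g : Fin k → Fin N) :
    (EE σ hσ X * EE τ hτ Y) f g =
      if ∀ j, j ∉ Set.range σ → j ∉ Set.range τ → f j = g j then
        X (f ∘ σ) (g ∘ σ) * Y (f ∘ τ) (g ∘ τ) else 0 := by
  rw [Matrix.mul_apply]
  have hd' : ∀ j, τ j ∉ Set.range σ := by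
    rintro j ⟨i, hi⟩; exact hd i j hi
  rw [Finset.sum_eq_single (fun j => if j ∈ Set.range σ then g j else f j)]
  · have e1 : (fun j => if j ∈ Set.range σ then g j else f j) ∘ σ = g ∘ σ := by
      funext i; simp
    have e2 : (fun j => if j ∈ Set.range σ then g j else f j) ∘ τ = f ∘ τ := by
      funext i; simp only [Function.comp, if_neg (hd' i)]
    rw [EE_apply, EE_apply, e1, e2, if_pos]
    · by_cases h : ∀ j, j ∉ Set.range σ → j ∉ Set.range τ → f j = g j
      · rw [if_pos h, if_pos]
        intro j hj
        by_cases hs : j ∈ Set.range σ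
        · simp only [if_pos hs]
        · simp only [if_neg hs]; exact h j hs hj
      · rw [if_neg h, if_neg, mul_zero]
        intro h'
        apply h
        intro j h1 h2
        have := h' j h2
        simpa only [if_neg h1] using this
    · intro j hj; simp only [if_neg hj]
  · intro h _ hne
    rw [EE_apply, EE_apply]
    by_cases h1 : ∀ j, j ∉ Set.range σ → f j = h j
    · by_cases h2 : ∀ j, j ∉ Set.range τ → h j = g j
      · exfalso
        apply hne
        funext j
        by_cases hs : j ∈ Set.range σ
        · rw [if_pos hs]
          obtain ⟨i, rfl⟩ := hs
          apply h2
          rintro ⟨i', hi'⟩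
          exact hd i i' hi'.symm
        · rw [if_neg hs, h1 j hs]
      · rw [if_neg h2, mul_zero]
    · rw [if_neg h1, zero_mul]
  · intro h; exact absurd (Finset.mem_univ _) h

theorem EE_comm_disj [Algebra ℂ A] {m l k : ℕ} (σ : Fin m → Fin k)
    (hσ : Function.Injective σ)
    (τ : Fin l → Fin k) (hτ : Function.Injective τ) (hd : ∀ i j, σ i ≠ τ j)
    (X : TMat N m A) (Y : TMat N l ℂ) :
    Commute (EE σ hσ X) (EE τ hτ (liftC A Y)) := by
  classical
  show _ * _ = _ * _
  ext f g
  rw [EE_mul_disj σ hσ τ hτ hd, EE_mul_disj τ hτ σ hσ (fun i j h => hd j i h.symm)]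
  have : (∀ j, j ∉ Set.range σ → j ∉ Set.range τ → f j = g j) ↔
      (∀ j, j ∉ Set.range τ → j ∉ Set.range σ → f j = g j) :=
    ⟨fun h j a b => h j b a, fun h j a b => h j b a⟩
  simp only [this]
  split_ifs
  · exact (Algebra.commutes _ _).symm
  · rfl

/-- consecutive positions -/
def sh {m k : ℕ} (i : ℕ) (h : i + m ≤ k) : Fin m → Fin k := fun j => ⟨i + j.1, by omega⟩

theorem sh_inj {m k : ℕ} (i : ℕ) (h : i + m ≤ k) : Function.Injective (sh i h) := by
  intro a b hab
  simp only [sh, Fin.mk.injEq] at hab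
  exact Fin.ext (by omega)

theorem sh_range {m k : ℕ} (i : ℕ) (h : i + m ≤ k) (j : Fin k) :
    j ∈ Set.range (sh i h) ↔ i ≤ j.1 ∧ j.1 < i + m := by
  constructor
  · rintro ⟨a, rfl⟩
    simp only [sh]; omega
  · rintro ⟨h1, h2⟩
    exact ⟨⟨j.1 - i, by omega⟩, Fin.ext (by simp only [sh]; omega)⟩

theorem EE_embR {m k : ℕ} (i : ℕ) (h : i + m ≤ k) (R : RMat N) (a : ℕ) (ha : a + 1 < m) :
    EE (sh i h) (sh_inj i h) (embR m R a) = embR k R (i + a) := by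
  classical
  ext f g
  rw [EE_apply]
  simp only [sh_range, embR, dif_pos ha]
  rw [dif_pos (show i + a + 1 < k by omega)]
  have e : (∀ j : Fin k, j.1 ≠ i + a → j.1 ≠ i + a + 1 → f j = g j) ↔
     ((∀ j : Fin k, ¬ (i ≤ j.1 ∧ j.1 < i + m) → f j = g j) ∧
      ∀ j : Fin m, j.1 ≠ a → j.1 ≠ a + 1 → (f ∘ sh i h) j = (g ∘ sh i h) j) := by
    constructor
    · intro H
      refine ⟨fun j hj => H j (by omega) (by omega), fun j h1 h2 => H _ ?_ ?_⟩ <;>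
        simp only [sh] <;> omega
    · rintro ⟨H1, H2⟩ j h1 h2
      by_cases hj : i ≤ j.1 ∧ j.1 < i + m
      · have := H2 ⟨j.1 - i, by omega⟩ (by simp only; omega) (by simp only; omega)
        have e : sh i h ⟨j.1 - i, by omega⟩ = j := Fin.ext (by simp only [sh]; omega)
        simpa only [Function.comp, e] using this
      · exact H1 j hj
  simp only [e, ite_and]
  rfl

theorem EE_emb1 {m k : ℕ} (h : 0 + m ≤ k) (X : Matrix (Fin N) (Fin N) A) (hm : 0 < m) :
    EE (sh 0 h) (sh_inj 0 h) (emb1 m X) = emb1 k X := by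
  classical
  ext f g
  rw [EE_apply]
  simp only [sh_range, emb1, dif_pos hm]
  rw [dif_pos (show 0 < k by omega)]
  have e : (∀ j : Fin k, j.1 ≠ 0 → f j = g j) ↔
     ((∀ j : Fin k, ¬ (0 ≤ j.1 ∧ j.1 < 0 + m) → f j = g j) ∧
      ∀ j : Fin m, j.1 ≠ 0 → (f ∘ sh 0 h) j = (g ∘ sh 0 h) j) := by
    constructor
    · intro H
      refine ⟨fun j hj => H j (by omega), fun j h1 => H _ ?_⟩
      simp only [sh]; omega
    · rintro ⟨H1, H2⟩ j h1
      by_cases hj : 0 ≤ j.1 ∧ j.1 < 0 + m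
      · have := H2 ⟨j.1, by omega⟩ h1
        have e : sh 0 h ⟨j.1, by omega⟩ = j := Fin.ext (by simp only [sh]; omega)
        simpa only [Function.comp, e] using this
      · exact H1 j hj
  simp only [e, ite_and]
  rfl

theorem embR_two (R : RMat N) :
    embR 2 R 0 = R.submatrix (finTwoArrowEquiv (Fin N)) (finTwoArrowEquiv (Fin N)) := by
  ext f g
  simp only [embR]
  rw [dif_pos (by norm_num), if_pos]
  · rfl
  · intro j h1 h2; omega

theorem emb1_one (X : Matrix (Fin N) (Fin N) A) :
    emb1 1 X = X.submatrix (Equiv.funUnique (Fin 1) (Fin N)) (Equiv.funUnique (Fin 1) (Fin N)) := by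
  ext f g
  simp only [emb1]
  rw [dif_pos (by norm_num), if_pos]
  · rfl
  · intro j h1; omega

theorem embR_out {k : ℕ} (R : RMat N) (i : ℕ) (h : ¬ i + 1 < k) : embR k R i = 1 := by
  ext f g
  simp only [embR, dif_neg h]

theorem embR_mul {k : ℕ} (R S : RMat N) (i : ℕ) (hRS : R * S = 1) :
    embR k R i * embR k S i = 1 := by
  by_cases h : i + 1 < k
  · have h2 : i + 2 ≤ k := h
    have e1 := EE_embR i h2 R 0 (by norm_num)
    have e2 := EE_embR i h2 S 0 (by norm_num)
    rw [Nat.add_zero] at e1 e2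
    rw [← e1, ← e2, ← map_mul, embR_two, embR_two, submatrix_mul_equiv, hRS,
      submatrix_one_equiv, map_one]
  · rw [embR_out _ _ h, embR_out _ _ h, mul_one]

theorem emb1_mul {k : ℕ} (hk : 0 < k) (X Y : Matrix (Fin N) (Fin N) A) :
    emb1 k (X * Y) = emb1 k X * emb1 k Y := by
  have h : 0 + 1 ≤ k := by omega
  rw [← EE_emb1 h _ one_pos, ← EE_emb1 h _ one_pos, ← EE_emb1 h _ one_pos, ← map_mul,
    emb1_one, emb1_one, emb1_one, submatrix_mul_equiv]

theorem liftC_mul [Algebra ℂ A] {k : ℕ} (X Y : TMat N k ℂ) :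
    liftC A (X * Y) = liftC A X * liftC A Y := by
  simp only [liftC, Matrix.map_mul]

theorem liftC_one [Algebra ℂ A] {k : ℕ} : liftC A (1 : TMat N k ℂ) = 1 := by
  simp only [liftC]
  exact Matrix.map_one _ (map_zero _) (map_one _)

theorem embR_far [Algebra ℂ A] {k : ℕ} (R : RMat N) (i j : ℕ) (hij : i + 1 < j) :
    Commute (liftC A (embR k R i)) (liftC A (embR k R j)) := by
  by_cases h : j + 1 < k
  · have h1 : i + 2 ≤ k := by omega
    have h2 : j + 2 ≤ k := by omega
    have e1 := EE_embR i h1 R 0 (by norm_num)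
    have e2 := EE_embR j h2 R 0 (by norm_num)
    rw [Nat.add_zero] at e1 e2
    rw [← e1, ← e2, ← EE_liftC, ← EE_liftC]
    apply EE_comm_disj
    intro a b hab
    simp only [sh, Fin.mk.injEq] at hab
    omega
  · rw [embR_out R j h, liftC_one]; exact Commute.one_right _

theorem emb1_far [Algebra ℂ A] {k : ℕ} (hk : 0 < k) (R : RMat N)
    (X : Matrix (Fin N) (Fin N) A) (j : ℕ) (hj : 1 ≤ j) :
    Commute (emb1 k X) (liftC A (embR k R j)) := by
  by_cases h : j + 1 < k
  · have h1 : 0 + 1 ≤ k := by omega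
    have h2 : j + 2 ≤ k := by omega
    have e2 := EE_embR j h2 R 0 (by norm_num)
    rw [Nat.add_zero] at e2
    rw [← e2, ← EE_emb1 h1 _ one_pos, ← EE_liftC]
    apply EE_comm_disj
    intro a b hab
    simp only [sh, Fin.mk.injEq] at hab
    omega
  · rw [embR_out R j h, liftC_one]; exact Commute.one_right _

theorem embR_braid {k : ℕ} (R : RMat N) (hbr : IsBraiding R) (i : ℕ) (h : i + 2 < k) :
    embR k R i * embR k R (i + 1) * embR k R i
      = embR k R (i + 1) * embR k R i * embR k R (i + 1) := by
  have h3 : i + 3 ≤ k := h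
  have e1 := EE_embR i h3 R 0 (by norm_num)
  have e2 := EE_embR i h3 R 1 (by norm_num)
  rw [Nat.add_zero] at e1
  rw [← e1, ← e2, ← map_mul, ← map_mul, ← map_mul, ← map_mul]
  exact congrArg _ hbr

theorem lift_chain [Algebra ℂ A] {k : ℕ} (R Rinv : RMat N) (a m : ℕ) (x : TMat N k ℂ) :
    liftC A (rChainDesc k R (a + m) (a + 1) * x * rChainAsc k Rinv (a + 1) (a + m))
      = Kc (fun i => liftC A (embR k R i)) (fun i => liftC A (embR k Rinv i)) a m
        (liftC A x) := by
  induction m with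
  | zero => simp [Kc, rChainDesc, rChainAsc]
  | succ m ih =>
    rw [Kc, ← ih, ← liftC_mul, ← liftC_mul]
    congr 1
    have e : a + (m + 1) + 1 - (a + 1) = m + 1 := by omega
    have e' : a + m + 1 - (a + 1) = m := by omega
    have e'' : a + 1 + m - 1 = a + m := by omega
    simp only [rChainDesc, rChainAsc, e, e', List.range'_1_concat, List.reverse_append,
      List.map_append, List.prod_append, List.reverse_cons, List.reverse_nil, List.nil_append,
      List.map_cons, List.map_nil, List.prod_cons, List.prod_nil, mul_one, e'', mul_assoc]

end Emb

/-- the commutation rule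
`D_{p̄} L_{k̄} = L_{k̄} D_{p̄} R_{k−1→p+1} R_p⁻² R⁻¹_{p+1→k−1}
  + D_{p̄} R_{k−1→p+1} R_p⁻¹ R⁻¹_{p+1→k−1}` for `k ≥ 2`, `1 ≤ p ≤ k−1`,
with `L = MD`. -/
theorem statement7 {N : ℕ} (R Rinv : RMat N) (q : ℂ)
    (hq0 : q ≠ 0) (hq1 : q ≠ 1) (hqm1 : q ≠ -1)
    (hinv : R * Rinv = 1) (hinv' : Rinv * R = 1)
    (hbr : IsBraiding R) (hH : HeckeCond R q)
    {A : Type _} [Ring A] [Algebra ℂ A]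
    (M D : Matrix (Fin N) (Fin N) A)
    (hRE : RERel R M) (hDD : DDRel Rinv D) (hperm : PermRel R Rinv M D) :
    ∀ k p : ℕ, 2 ≤ k → 1 ≤ p → p ≤ k - 1 →
      copyX k R Rinv D (p - 1) * copyX k R Rinv (M * D) (k - 1)
        = copyX k R Rinv (M * D) (k - 1) * copyX k R Rinv D (p - 1) *
              liftC A (rChainDesc k R (k - 1) (p + 1) *
                (embR k Rinv (p - 1) * embR k Rinv (p - 1)) *
                rChainAsc k Rinv (p + 1) (k - 1))
          + copyX k R Rinv D (p - 1) *
              liftC A (rChainDesc k R (k - 1) (p + 1) * embR k Rinv (p - 1) *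
                rChainAsc k Rinv (p + 1) (k - 1)) := by
  
  intro k p hk hp hpk
  obtain ⟨p, rfl⟩ : ∃ p', p = p' + 1 := ⟨p - 1, by omega⟩
  obtain ⟨n, rfl⟩ : ∃ n, k = p + 1 + n + 1 := ⟨k - p - 2, by omega⟩
  generalize hK : p + 1 + n + 1 = K at *
  have e1 : K - 1 = p + 1 + n := by omega
  have h2 : 0 + 2 ≤ K := by omega
  simp only [e1, Nat.add_sub_cancel]
  rw [lift_chain, lift_chain, liftC_mul]
  have t0 := EE_embR 0 h2 R 0 (by norm_num)
  have t1 := EE_embR 0 h2 Rinv 0 (by norm_num)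
  rw [Nat.add_zero] at t0 t1
  refine abs_main K (fun i => liftC A (embR K R i)) (fun i => liftC A (embR K Rinv i))
    (copyX K R Rinv D) (copyX K R Rinv (M * D)) (emb1 K M) ?_ ?_ ?_ ?_ ?_ ?_ ?_ ?_ ?_ ?_ ?_
    p n (by omega)
  · intro i; rw [← liftC_mul, embR_mul _ _ _ hinv, liftC_one]
  · intro i; rw [← liftC_mul, embR_mul _ _ _ hinv', liftC_one]
  · intro i j hij; exact embR_far R i j hij
  · intro i hi; simp only [← liftC_mul]; rw [embR_braid R hbr i hi]
  · intro i; rfl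
  · intro j hj; exact emb1_far (by omega) R D j hj
  · intro i; rfl
  · intro j hj; exact emb1_far (by omega) R (M * D) j hj
  · exact emb1_mul (by omega) M D
  · have := congrArg (EE (sh 0 h2) (sh_inj 0 h2)) hDD
    simp only [map_mul, EE_liftC, t1, EE_emb1 h2 D two_pos] at this
    exact this
  · have := congrArg (EE (sh 0 h2) (sh_inj 0 h2)) hperm
    simp only [map_mul, map_add, map_one, EE_liftC, t0, t1, EE_emb1 h2 D two_pos,
      EE_emb1 h2 M two_pos] at this
    exact this
end
end
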